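/- For every 0 < h₀ < 1/4 there exists C > 0 such that the bilinear form (𝒞_{h,H} u₁, u₂) := (1/2) ∫_ℝ e^{-|t|} t ( e^{ithA} B_{th} u₁, u₂ ) dt satisfies |(𝒞_{h,H} u₁, u₂)| ≤ C (1 + ‖H‖_{4,dil}) ‖|D|(hA+i)^{-1} u₁‖_{L²} ‖|D|(hA+i)^{-1} u₂‖_{L²} for all u₁, u₂ ∈ 𝒮(ℝ^d), all 0 < h < h₀, and all H. -/

import Mathlib

open MeasureTheory Filter Topology Complex
open scoped Real ENNReal FourierTransform ComplexConjugate

noncomputable section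

/-- Euclidean space `ℝ^d`. -/
abbrev Ed (d : ℕ) : Type := EuclideanSpace ℝ (Fin d)

/-- `L²(ℝ^d)` with complex values. -/
abbrev L2 (d : ℕ) := MeasureTheory.Lp ℂ 2 (volume : Measure (Ed d))

/-- The partial derivative `∂_j u`. -/
def pd (d : ℕ) (j : Fin d) (u : Ed d → ℂ) : Ed d → ℂ :=
  fun x => fderiv ℝ u x (EuclideanSpace.single j (1:ℝ))

/-- The operator `∑_{j,k} D_j (b_{jk} D_k) = - ∑_{j,k} ∂_j (b_{jk} ∂_k)` (complex
coefficients), applied to a function `u`. -/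
def divGradC (d : ℕ) (b : Ed d → Fin d → Fin d → ℂ) (u : Ed d → ℂ) : Ed d → ℂ :=
  fun x => -∑ j : Fin d, ∑ k : Fin d,
    fderiv ℝ (fun y => b y j k * fderiv ℝ u y (EuclideanSpace.single k (1:ℝ))) x
      (EuclideanSpace.single j (1:ℝ))

/-- `- div (G ∇ u) = ∑_{j,k} D_j (G_{jk} D_k) u` for a real coefficient matrix `G`. -/
def divGrad (d : ℕ) (G : Ed d → Fin d → Fin d → ℝ) (u : Ed d → ℂ) : Ed d → ℂ :=
  divGradC d (fun x j k => (G x j k : ℂ)) u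

/-- The operation `a ↦ x·∇a` on real valued functions. -/
def xdotOp (d : ℕ) : (Ed d → ℝ) → Ed d → ℝ := fun a x => fderiv ℝ a x x

/-- The operation `a ↦ x·∇a` on complex valued functions. -/
def xdotC (d : ℕ) : (Ed d → ℂ) → Ed d → ℂ := fun a x => fderiv ℝ a x x

/-- `a ∈ C_b^∞(ℝ^d)`: smooth with all derivatives bounded. -/
def CbSmooth (d : ℕ) (a : Ed d → ℝ) : Prop :=
  ContDiff ℝ (⊤ : ℕ∞) a ∧ ∀ n : ℕ, ∃ C : ℝ, ∀ x, ‖iteratedFDeriv ℝ n a x‖ ≤ C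

/-- `a ∈ S_dil(ℝ^d)` : `a ∈ C_b^∞` and `(x·∇)^n a ∈ L^∞` for all `n`. -/
def MemSdil (d : ℕ) (a : Ed d → ℝ) : Prop :=
  CbSmooth d a ∧ ∀ n : ℕ, ∃ C : ℝ, ∀ x, |(xdotOp d)^[n] a x| ≤ C

/-- Complex-valued version of `S_dil(ℝ^d)`. -/
def MemSdilC (d : ℕ) (a : Ed d → ℂ) : Prop :=
  (ContDiff ℝ (⊤ : ℕ∞) a ∧ ∀ n : ℕ, ∃ C : ℝ, ∀ x, ‖iteratedFDeriv ℝ n a x‖ ≤ C) ∧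
  ∀ n : ℕ, ∃ C : ℝ, ∀ x, ‖(xdotC d)^[n] a x‖ ≤ C

/-- The coefficient matrix is symmetric with real entries. -/
def SymmetricCoef (d : ℕ) (G : Ed d → Fin d → Fin d → ℝ) : Prop := ∀ x j k, G x j k = G x k j

/-- Uniform ellipticity: `Λ₊ ≥ G(x) ≥ Λ₋ > 0` as quadratic forms. -/
def UniformlyElliptic (d : ℕ) (G : Ed d → Fin d → Fin d → ℝ) : Prop :=
  ∃ lam Lam : ℝ, 0 < lam ∧ ∀ (x : Ed d) (v : Fin d → ℝ),
    lam * ∑ j, v j ^ 2 ≤ (∑ j, ∑ k, G x j k * v j * v k) ∧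
      (∑ j, ∑ k, G x j k * v j * v k) ≤ Lam * ∑ j, v j ^ 2

/-- The standing assumptions of the paper: `G` symmetric with entries in `C_b^∞`,
uniformly elliptic. -/
def Standing (d : ℕ) (G : Ed d → Fin d → Fin d → ℝ) : Prop :=
  (∀ j k, CbSmooth d fun x => G x j k) ∧ SymmetricCoef d G ∧ UniformlyElliptic d G

/-- `G = I_d + H`. -/
def Gmat (d : ℕ) (H : Ed d → Fin d → Fin d → ℝ) : Ed d → Fin d → Fin d → ℝ :=
  fun x j k => (if j = k then 1 else 0) + H x j k

/-- Long range condition `|∂^α (G - I_d)| ≤ C_α ⟨x⟩^{-μ-|α|}`. -/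
def LongRange (d : ℕ) (G : Ed d → Fin d → Fin d → ℝ) (μ : ℝ) : Prop :=
  ∀ (j k : Fin d) (n : ℕ), ∃ C : ℝ, ∀ x : Ed d,
    ‖iteratedFDeriv ℝ n (fun y => G y j k - if j = k then (1:ℝ) else 0) x‖
      ≤ C * ((1 + ‖x‖ ^ 2) ^ (-(μ + n) / 2) : ℝ)

/-- `R` is the resolvent `(P - z)⁻¹` of the self-adjoint realization of
`P = - div (G ∇·)`: for every `f ∈ L²`, `g = R f` solves `(P - z) g = f` in the sense
of distributions (this characterizes the resolvent uniquely). -/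
def IsWeakResolvent (d : ℕ) (G : Ed d → Fin d → Fin d → ℝ) (z : ℂ)
    (R : L2 d →L[ℂ] L2 d) : Prop :=
  ∀ (f : L2 d) (φ : SchwartzMap (Ed d) ℂ),
    (∫ x, (R f) x * divGrad d G (⇑φ) x) - z * (∫ x, (R f) x * φ x) = ∫ x, f x * φ x

/-- The japanese bracket weight `⟨x⟩^s = (1+|x|²)^{s/2}`. -/
def jweight (d : ℕ) (s : ℝ) : Ed d → ℝ := fun x => (1 + ‖x‖ ^ 2) ^ (s / 2)

/-- The dilation group `(e^{itA} u)(x) = e^{td/2} u(e^t x)`, where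
`A = (x·∇ + ∇·x)/(2i)` is the generator of dilations. -/
def dil (d : ℕ) (t : ℝ) (u : Ed d → ℂ) : Ed d → ℂ :=
  fun x => (Real.exp (t * d / 2) : ℂ) * u (Real.exp t • x)

/-- The `L²` inner product of two functions (conjugate linear in the first variable,
as is Mathlib's convention). -/
def pairL2 (d : ℕ) (u v : Ed d → ℂ) : ℂ := ∫ x : Ed d, (starRingEnd ℂ) (u x) * v x

/-- The resolvent `(hA - z)⁻¹ = (1/i) ∫₀^{±∞} e^{-itz} e^{ithA} dt` (`± Im z < 0`) of the
(rescaled) generator of dilations, realized by its defining integral formula. -/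
def resDil (d : ℕ) (h : ℝ) (z : ℂ) (u : Ed d → ℂ) : Ed d → ℂ := fun x =>
  if z.im < 0 then
    Complex.I⁻¹ * ∫ t in Set.Ici (0:ℝ), Complex.exp (-(Complex.I * t * z)) * dil d (t * h) u x
  else
    -Complex.I⁻¹ * ∫ t in Set.Iic (0:ℝ), Complex.exp (-(Complex.I * t * z)) * dil d (t * h) u x

/-- `sin(τ A) u = (e^{iτA} - e^{-iτA}) u / (2i)`. -/
def sinA (d : ℕ) (τ : ℝ) (u : Ed d → ℂ) : Ed d → ℂ :=
  fun x => (dil d τ u x - dil d (-τ) u x) / (2 * Complex.I)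

/-- `F(hA) = arctan(hA)` realized through `arctan λ = ∫₀^∞ sin(tλ) e^{-t} dt / t`. -/
def arctanA (d : ℕ) (h : ℝ) (u : Ed d → ℂ) : Ed d → ℂ :=
  fun x => ∫ t in Set.Ioi (0:ℝ), ((Real.exp (-t) / t : ℝ) : ℂ) * sinA d (t * h) u x

/-- Coefficients of the commutator `i[P,A] = ∑ D_j (2G_{jk} - x·∇G_{jk}) D_k`. -/
def commCoef (d : ℕ) (G : Ed d → Fin d → Fin d → ℝ) : Ed d → Fin d → Fin d → ℝ :=
  fun x j k => 2 * G x j k - xdotOp d (fun y => G y j k) x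

/-- `P_τ = e^{-iτA} (i[P,A]) e^{iτA}` applied to a function. -/
def ptauFun (d : ℕ) (G : Ed d → Fin d → Fin d → ℝ) (τ : ℝ) (u : Ed d → ℂ) : Ed d → ℂ :=
  dil d (-τ) (divGrad d (commCoef d G) (dil d τ u))

/-- Coefficients of `P_τ = e^{-iτA} (i[P,A]) e^{iτA}` for `P = -div((I+H)∇)`;
indeed `e^{-iτA} (∑ D_j b D_k) e^{iτA} = e^{2τ} ∑ D_j b(e^{-τ}x) D_k`. -/
def ptauCoef (d : ℕ) (H : Ed d → Fin d → Fin d → ℝ) (τ : ℝ) : Ed d → Fin d → Fin d → ℝ :=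
  fun x j k => Real.exp (2 * τ) * commCoef d (Gmat d H) (Real.exp (-τ) • x) j k

/-- Coefficients of `Q_s = ∫₀¹ (d P_τ / dτ)|_{τ=σs} dσ`. -/
def qCoef (d : ℕ) (H : Ed d → Fin d → Fin d → ℝ) (s : ℝ) : Ed d → Fin d → Fin d → ℝ :=
  fun x j k => ∫ σ in (0:ℝ)..(1:ℝ), deriv (fun τ => ptauCoef d H τ x j k) (σ * s)

/-- Coefficients of `B_τ = τ ∫₀¹ s Q_{sτ} ds`. -/
def bCoef (d : ℕ) (H : Ed d → Fin d → Fin d → ℝ) (τ : ℝ) : Ed d → Fin d → Fin d → ℝ :=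
  fun x j k => τ * ∫ s in (0:ℝ)..(1:ℝ), s * qCoef d H (s * τ) x j k

/-- The Fourier multiplier `|D|` (with symbol `|ξ|`). -/
def absD (d : ℕ) (u : Ed d → ℂ) : Ed d → ℂ :=
  fun x => 𝓕⁻ (fun ξ : Ed d => (‖ξ‖ : ℂ) * 𝓕 u ξ) x

/-- `‖ |D| w ‖_{L²}`, computed on the Fourier side (Plancherel). -/
def Dnorm (d : ℕ) (w : Ed d → ℂ) : ℝ :=
  (eLpNorm (fun ξ : Ed d => (‖ξ‖ : ℂ) * 𝓕 w ξ) 2 volume).toReal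

/-- A general Fourier multiplier `ρ(D)`. -/
def multD (d : ℕ) (ρ : Ed d → ℂ) (u : Ed d → ℂ) : Ed d → ℂ :=
  fun x => 𝓕⁻ (fun ξ : Ed d => ρ ξ * 𝓕 u ξ) x

/-- The operator `A = (x·∇ + ∇·x)/(2i) = (x·∇ + d/2)/i` applied to a function. -/
def opA (d : ℕ) (u : Ed d → ℂ) : Ed d → ℂ :=
  fun x => (fderiv ℝ u x x + (d / 2 : ℂ) * u x) / Complex.I

/-- The functions `F_ν(λ) = ∫₀^∞ sin(tλ) t/(t²+ν²) e^{-t} dt` approximating `arctan`. -/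
def Fnu (ν lam : ℝ) : ℝ :=
  ∫ t in Set.Ioi (0:ℝ), Real.sin (t * lam) * (t / (t ^ 2 + ν ^ 2)) * Real.exp (-t)

/-- `m`-admissible family in `S_dil(ℝ^d)`:
`‖∂_τ^k (x·∇)^n b_τ‖_{L^∞} ≤ C_{kn} e^{m|τ|}` for all `k, n`. -/
def AdmissibleCoeff (d : ℕ) (m : ℕ) (b : ℝ → Ed d → ℂ) : Prop :=
  (∀ τ, MemSdilC d (b τ)) ∧
  (∀ (n : ℕ) (x : Ed d), ContDiff ℝ (⊤ : ℕ∞) fun τ => (xdotC d)^[n] (b τ) x) ∧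
  ∀ k n : ℕ, ∃ C : ℝ, ∀ (τ : ℝ) (x : Ed d),
    ‖iteratedDeriv k (fun σ => (xdotC d)^[n] (b σ) x) τ‖ ≤ C * Real.exp (m * |τ|)

/-- `m`-admissible family of differential operators `B_τ = ∑ D_j b_{jk,τ} D_k`. -/
def AdmissibleOp (d : ℕ) (m : ℕ) (B : ℝ → Ed d → Fin d → Fin d → ℂ) : Prop :=
  ∀ j k, AdmissibleCoeff d m fun τ x => B τ x j k

/-- Functions that are continuous and bounded on `[0,∞)` (the spectrum of `P`). -/
def GoodSymbol (φ : ℝ → ℂ) : Prop :=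
  Continuous φ ∧ ∃ C : ℝ, ∀ lam : ℝ, 0 ≤ lam → ‖φ lam‖ ≤ C

/-- The (continuous bounded) functional calculus `φ ↦ φ(P)` of the nonnegative
self-adjoint operator `P = -div(G∇)`, characterized by: it is linear and
multiplicative on continuous functions bounded on `[0,∞) ⊇ spec(P)`, compatible with
sup-norm bounds and adjoints, only depends on the restriction of the symbol to
`[0,∞)`, and sends `λ ↦ (λ - z)⁻¹` to the resolvent `(P - z)⁻¹`.  These properties
determine `φ(P)` uniquely for every `φ` continuous and vanishing at infinity.
Moreover `0` is not an eigenvalue of `P` (field `ker_triv`). -/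
structure SpectralCalc (d : ℕ) (G : Ed d → Fin d → Fin d → ℝ) where
  map : (ℝ → ℂ) → (L2 d →L[ℂ] L2 d)
  map_congr : ∀ φ ψ, GoodSymbol φ → GoodSymbol ψ →
    (∀ lam : ℝ, 0 ≤ lam → φ lam = ψ lam) → map φ = map ψ
  map_add : ∀ φ ψ, GoodSymbol φ → GoodSymbol ψ →
    map (fun lam => φ lam + ψ lam) = map φ + map ψ
  map_smul : ∀ (c : ℂ) φ, GoodSymbol φ → map (fun lam => c * φ lam) = c • map φ
  map_mul : ∀ φ ψ, GoodSymbol φ → GoodSymbol ψ →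
    map (fun lam => φ lam * ψ lam) = (map φ).comp (map ψ)
  map_norm : ∀ (φ) (C : ℝ), (∀ lam : ℝ, 0 ≤ lam → ‖φ lam‖ ≤ C) → ‖map φ‖ ≤ C
  map_star : ∀ φ, GoodSymbol φ →
    ContinuousLinearMap.adjoint (map φ) = map (fun lam => (starRingEnd ℂ) (φ lam))
  map_resolvent : ∀ z : ℂ, z.im ≠ 0 →
    IsWeakResolvent d G z (map fun lam => ((lam : ℂ) - z)⁻¹)
  ker_triv : ∀ f : L2 d,
    (∀ φ : SchwartzMap (Ed d) ℂ, (∫ x, f x * divGrad d G (⇑φ) x) = 0) → f = 0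

/-- `Rj = ∂_j P^{-1/2}` is the `j`-th Riesz transform of `P`, defined as the strong
limit `s-lim_n π^{-1/2} ∂_j ∫_{1/n}^n e^{-tP} dt/√t`; here `gn n` is the vector
integral `∫_{1/n}^n e^{-tP} f dt/√t` and `wn n` is its distributional `∂_j`
derivative. -/
def RieszOf (d : ℕ) (G : Ed d → Fin d → Fin d → ℝ) (S : SpectralCalc d G) (j : Fin d)
    (Rj : L2 d →L[ℂ] L2 d) : Prop :=
  ∀ (f : L2 d) (gn wn : ℕ → L2 d),
    (∀ n : ℕ, gn n = ∫ t in Set.Icc ((n : ℝ)⁻¹) (n : ℝ),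
        ((Real.sqrt t)⁻¹ : ℝ) • (S.map (fun lam => Complex.exp (-(t : ℂ) * ((max lam 0 : ℝ) : ℂ))) f)) →
    (∀ (n : ℕ) (φ : SchwartzMap (Ed d) ℂ),
        (∫ x, (wn n) x * φ x) = -∫ x, (gn n) x * pd d j (⇑φ) x) →
    Tendsto (fun n : ℕ => ((Real.sqrt Real.pi)⁻¹ : ℝ) • wn n) atTop (𝓝 (Rj f))

/-!
Write `B_τ = τ⁻¹ (e^{-iτA} P e^{iτA} - P - τ i[P, A])`, a Taylor remainder: on each half-line
`t = ±s` the form becomes `∫₀^∞ ∫ w(s, x) ∂_k ū₁ e^{∓ishA} ∂_j u₂ dx ds`, whose weight `w` contains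
a factor `1/h`. Since `e^{ishA}` is, up to sign, `(∂_s - c) e^{ishA}` applied to the resolvent
`(c - ihA)⁻¹`, an integration by parts in `s` replaces `∂_j u₂` by its resolvent and `w` by its
derivative along the orbit. Moving the dilation to the other factor and integrating by parts once
more does the same for `u₁`. The two derivatives cancel the factor `1/h`, so the final weight is
bounded by a multiple of `(1 + s) e^{-(1 - h₀)s}` uniformly in `h`, and Cauchy–Schwarz applies.

The spectral parameter is `c = 1 - h` because `(1 - h - ihA)⁻¹ ∂_k = ∂_k (1 - ihA)⁻¹`; Plancherel
then bounds the `L²` norm of this function of `u` by `2π ‖|D| (hA + i)⁻¹ u‖`.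
-/

section Dilation

variable {d : ℕ} {p q : Ed d → ℂ}

lemma dil_dil (s t : ℝ) (q : Ed d → ℂ) : dil d s (dil d t q) = dil d (s + t) q := by
  funext x
  simp only [dil, smul_smul, ← Real.exp_add, ← mul_assoc, ← Complex.ofReal_mul]
  congr 3 <;> ring_nf

lemma measurable_dil (τ : ℝ) (hq : Measurable q) : Measurable (dil d τ q) := by
  unfold dil; fun_prop

lemma measurable_dil_uncurry (η : ℝ) (hq : Measurable q) :
    Measurable fun z : ℝ × Ed d => dil d (z.1 * η) q z.2 := by
  unfold dil; fun_prop

lemma continuous_dil_apply (h : ℝ) (hq : Continuous q) (x : Ed d) :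
    Continuous fun t : ℝ => dil d (t * h) q x := by
  unfold dil; fun_prop

lemma map_exp_smul_volume (τ : ℝ) :
    Measure.map (fun x : Ed d => Real.exp τ • x) volume
      = ENNReal.ofReal (Real.exp (-(τ * d))) • volume := by
  rw [Measure.map_addHaar_smul volume (Real.exp_pos τ).ne', finrank_euclideanSpace_fin,
    ← Real.exp_nat_mul, ← Real.exp_neg, abs_of_pos (Real.exp_pos _), mul_comm]

lemma eLpNorm_dil {r : ℝ≥0∞} (hr : r ≠ ∞) (τ : ℝ) (hq : Measurable q) :
    eLpNorm (dil d τ q) r volume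
      = ENNReal.ofReal (Real.exp (τ * d * (1 / 2 - 1 / r.toReal))) * eLpNorm q r volume := by
  have hscale : eLpNorm (fun x => q (Real.exp τ • x)) r volume
      = ENNReal.ofReal (Real.exp (-(τ * d))) ^ (1 / r).toReal * eLpNorm q r volume := by
    rw [← smul_eq_mul, ← eLpNorm_smul_measure_of_ne_top hr, ← map_exp_smul_volume,
      eLpNorm_map_measure hq.aestronglyMeasurable (by fun_prop)]
    rfl
  have hdil : dil d τ q = (Real.exp (τ * d / 2) : ℂ) • fun x => q (Real.exp τ • x) := rfl
  rw [hdil, eLpNorm_const_smul, hscale, ← mul_assoc, ← ofReal_norm, Complex.norm_real,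
    Real.norm_eq_abs, abs_of_pos (Real.exp_pos _), ENNReal.ofReal_rpow_of_pos (Real.exp_pos _),
    ← ENNReal.ofReal_mul (Real.exp_pos _).le, ← Real.exp_mul, ← Real.exp_add]
  congr 3
  simp only [one_div, ENNReal.toReal_inv]
  ring

lemma eLpNorm_two_dil (τ : ℝ) (hq : Measurable q) :
    eLpNorm (dil d τ q) 2 volume = eLpNorm q 2 volume := by
  simp [eLpNorm_dil (r := 2) (by norm_num) τ hq]

lemma memLp_dil {r : ℝ≥0∞} (hr : r ≠ ∞) (τ : ℝ) (hqm : Measurable q) (hq : MemLp q r) :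
    MemLp (dil d τ q) r := by
  refine ⟨(measurable_dil τ hqm).aestronglyMeasurable, ?_⟩
  rw [eLpNorm_dil hr τ hqm]
  exact ENNReal.mul_lt_top ENNReal.ofReal_lt_top hq.2

lemma integral_norm_dil (τ : ℝ) (hq : Measurable q) :
    ∫ x, ‖dil d τ q x‖ = Real.exp (-(τ * d / 2)) * ∫ x, ‖q x‖ := by
  have hscale := congrArg ENNReal.toReal (eLpNorm_dil (r := 1) ENNReal.one_ne_top τ hq)
  rw [ENNReal.toReal_mul, ENNReal.toReal_ofReal (Real.exp_pos _).le,
    toReal_eLpNorm (measurable_dil τ hq).aestronglyMeasurable,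
    toReal_eLpNorm hq.aestronglyMeasurable,
    lpNorm_one_eq_integral_norm (measurable_dil τ hq).aestronglyMeasurable,
    lpNorm_one_eq_integral_norm hq.aestronglyMeasurable] at hscale
  rw [hscale]
  congr 2
  norm_num
  ring

lemma integral_mul_dil_neg (τ : ℝ) (m p q : Ed d → ℂ) :
    ∫ x, m x * (p x * dil d (-τ) q x) = ∫ y, m (Real.exp τ • y) * (q y * dil d τ p y) := by
  have hcomp : ∀ y : Ed d, m (Real.exp τ • y) * (q y * dil d τ p y)
      = (Real.exp (τ * d) : ℂ) * (m (Real.exp τ • y) * (p (Real.exp τ • y) *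
        dil d (-τ) q (Real.exp τ • y))) := by
    intro y
    have hcancel : Real.exp (-τ) • Real.exp τ • y = y := by
      rw [smul_smul, ← Real.exp_add]; simp
    have hexp : Real.exp (τ * d / 2) = Real.exp (τ * d) * Real.exp (-τ * d / 2) := by
      rw [← Real.exp_add]; congr 1; ring
    simp only [dil, hcancel, hexp]
    push_cast; ring
  simp_rw [hcomp]
  rw [integral_const_mul, Measure.integral_comp_smul_of_nonneg (μ := (volume : Measure (Ed d)))
    (fun x => m x * (p x * dil d (-τ) q x)) (Real.exp τ) (hR := (Real.exp_pos τ).le),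
    finrank_euclideanSpace_fin, ← Real.exp_nat_mul, ← Real.exp_neg, Complex.real_smul,
    ← mul_assoc, ← Complex.ofReal_mul, ← Real.exp_add, mul_comm τ, add_neg_cancel]
  simp

end Dilation

section DilationForm

variable {d : ℕ} {w : ℝ → Ed d → ℝ} {μ : ℝ → ℝ} {p q : Ed d → ℂ}

/-- The form `∫₀^∞ (∫ w(t, x) p(x) (e^{itηA} q)(x) dx) dt`, bilinear in `p` and `q`. -/
def dilForm (d : ℕ) (η : ℝ) (w : ℝ → Ed d → ℝ) (p q : Ed d → ℂ) : ℂ :=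
  ∫ t in Set.Ioi (0 : ℝ), ∫ x, (w t x : ℂ) * (p x * dil d (t * η) q x)

/-- The weight `w` on `(0, ∞) × ℝ^d` is dominated by an integrable function `μ` of time. -/
structure IsDominatedWeight (w : ℝ → Ed d → ℝ) (μ : ℝ → ℝ) : Prop where
  measurable : Measurable fun z : ℝ × Ed d => w z.1 z.2
  integrableOn : IntegrableOn μ (Set.Ioi 0)
  abs_le : ∀ t, 0 < t → ∀ x, |w t x| ≤ μ t

lemma integrable_mul_mul_dil {m : Ed d → ℝ} {B : ℝ} (hm : Measurable m) (hB : ∀ x, |m x| ≤ B)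
    (hp : MemLp p 2) (hqm : Measurable q) (hq : MemLp q 2) (τ : ℝ) :
    Integrable fun x => (m x : ℂ) * (p x * dil d τ q x) :=
  (hp.integrable_mul (memLp_dil (by norm_num) τ hqm hq)).bdd_mul
    (c := B) (by fun_prop) (ae_of_all _ fun x => by simpa using hB x)

lemma integral_norm_mul_mul_dil_le {m : Ed d → ℝ} {B : ℝ} (hm : Measurable m)
    (hB : ∀ x, |m x| ≤ B) (hp : MemLp p 2) (hqm : Measurable q) (hq : MemLp q 2) (τ : ℝ) :
    ∫ x, ‖(m x : ℂ) * (p x * dil d τ q x)‖ ≤ B * (lpNorm p 2 volume * lpNorm q 2 volume) := by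
  have hdq : MemLp (dil d τ q) 2 := memLp_dil (by norm_num) τ hqm hq
  have hB0 : 0 ≤ B := (abs_nonneg _).trans (hB 0)
  have hholder : ∫ x, ‖p x * dil d τ q x‖ ≤ lpNorm p 2 volume * lpNorm q 2 volume := by
    have h := ENNReal.toReal_mono (ENNReal.mul_ne_top hp.2.ne hdq.2.ne)
      (eLpNorm_smul_le_mul_eLpNorm (r := 1) hdq.1 hp.1)
    rw [eLpNorm_two_dil τ hqm, ENNReal.toReal_mul, toReal_eLpNorm hp.1, toReal_eLpNorm hq.1,
      toReal_eLpNorm (hp.1.smul hdq.1), lpNorm_one_eq_integral_norm (hp.1.smul hdq.1)] at h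
    exact h
  calc ∫ x, ‖(m x : ℂ) * (p x * dil d τ q x)‖
      ≤ ∫ x, B * ‖p x * dil d τ q x‖ := by
        refine integral_mono (integrable_mul_mul_dil hm hB hp hqm hq τ).norm
          ((hp.integrable_mul hdq).norm.const_mul B) fun x => ?_
        simp only [norm_mul (m x : ℂ), Complex.norm_real, Real.norm_eq_abs]
        exact mul_le_mul_of_nonneg_right (hB x) (norm_nonneg _)
    _ = B * ∫ x, ‖p x * dil d τ q x‖ := integral_const_mul _ _
    _ ≤ _ := mul_le_mul_of_nonneg_left hholder hB0

namespace IsDominatedWeight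

variable (hw : IsDominatedWeight w μ) (hpm : Measurable p) (hp : MemLp p 2)
  (hqm : Measurable q) (hq : MemLp q 2) (η : ℝ)

include hw

lemma measurable_apply (t : ℝ) : Measurable (w t) :=
  hw.measurable.comp measurable_prodMk_left

include hp hqm hq

lemma integral_norm_le {t : ℝ} (ht : 0 < t) :
    ∫ x, ‖(w t x : ℂ) * (p x * dil d (t * η) q x)‖
      ≤ μ t * (lpNorm p 2 volume * lpNorm q 2 volume) :=
  integral_norm_mul_mul_dil_le (hw.measurable_apply t) (hw.abs_le t ht) hp hqm hq _

include hpm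

lemma integrable_prod :
    Integrable (fun z : ℝ × Ed d => (w z.1 z.2 : ℂ) * (p z.2 * dil d (z.1 * η) q z.2))
      ((volume.restrict (Set.Ioi 0)).prod volume) := by
  have hmeas : Measurable fun z : ℝ × Ed d =>
      (w z.1 z.2 : ℂ) * (p z.2 * dil d (z.1 * η) q z.2) :=
    (Complex.measurable_ofReal.comp hw.measurable).mul
      ((hpm.comp measurable_snd).mul (measurable_dil_uncurry η hqm))
  refine (integrable_prod_iff hmeas.aestronglyMeasurable).2 ⟨?_, ?_⟩
  · filter_upwards [ae_restrict_mem measurableSet_Ioi] with t ht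
    exact integrable_mul_mul_dil (hw.measurable_apply t) (hw.abs_le t ht) hp hqm hq _
  · refine (hw.integrableOn.mul_const (lpNorm p 2 volume * lpNorm q 2 volume)).mono'
      hmeas.aestronglyMeasurable.norm.integral_prod_right' ?_
    filter_upwards [ae_restrict_mem measurableSet_Ioi] with t ht
    rw [Real.norm_of_nonneg (integral_nonneg fun _ => norm_nonneg _)]
    exact hw.integral_norm_le hp hqm hq η ht

lemma integrableOn_integral :
    IntegrableOn (fun t => ∫ x, (w t x : ℂ) * (p x * dil d (t * η) q x)) (Set.Ioi 0) :=
  (hw.integrable_prod hpm hp hqm hq η).integral_prod_left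

lemma dilForm_eq_integral_integral :
    dilForm d η w p q
      = ∫ x, ∫ t in Set.Ioi (0 : ℝ), (w t x : ℂ) * (p x * dil d (t * η) q x) :=
  integral_integral_swap (hw.integrable_prod hpm hp hqm hq η)

omit hpm

lemma norm_dilForm_le :
    ‖dilForm d η w p q‖
      ≤ (∫ t in Set.Ioi 0, μ t) * (lpNorm p 2 volume * lpNorm q 2 volume) := by
  rw [← integral_mul_const]
  refine norm_integral_le_of_norm_le (hw.integrableOn.mul_const _) ?_
  filter_upwards [ae_restrict_mem measurableSet_Ioi] with t ht
  exact (norm_integral_le_integral_norm _).trans (hw.integral_norm_le hp hqm hq η ht)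

end IsDominatedWeight

lemma dilForm_neg (η : ℝ) (w : ℝ → Ed d → ℝ) (p q : Ed d → ℂ) :
    dilForm d (-η) w p q = dilForm d η (fun t y => w t (Real.exp (t * η) • y)) q p :=
  integral_congr_ae <| ae_of_all _ fun t => by
    simpa only [mul_neg] using integral_mul_dil_neg (t * η) (fun x => (w t x : ℂ)) p q

end DilationForm

lemma hasDerivAt_integral_Ioi {E : Type*} [NormedAddCommGroup E] [NormedSpace ℝ E]
    [CompleteSpace E] {ψ : ℝ → E} (hψ : Continuous ψ) {a : ℝ} (hint : IntegrableOn ψ (Set.Ioi a))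
    (t : ℝ) : HasDerivAt (fun t => ∫ s in Set.Ioi t, ψ s) (-ψ t) t := by
  have htail : ∀ t, IntegrableOn ψ (Set.Ioi t) := fun t =>
    (hint.union (hψ.integrableOn_Icc (a := t) (b := a))).mono_set fun s hs =>
      (lt_or_ge a s).imp id fun hsa => ⟨le_of_lt hs, hsa⟩
  have hsplit : (fun t => ∫ s in Set.Ioi t, ψ s)
      = fun t => (∫ s in Set.Ioi a, ψ s) - ∫ s in a..t, ψ s := by
    funext t
    rw [← intervalIntegral.integral_Ioi_sub_Ioi' hint (htail t), sub_sub_cancel]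
  rw [hsplit]
  exact (intervalIntegral.integral_hasDerivAt_right (hψ.intervalIntegrable a t)
    hψ.aestronglyMeasurable.stronglyMeasurableAtFilter hψ.continuousAt).const_sub _

lemma lintegral_mul_sq_le {α : Type*} [MeasurableSpace α] {μ : Measure α} {f g : α → ℝ≥0∞}
    (hf : Measurable f) (hg : Measurable g) :
    (∫⁻ a, f a * g a ∂μ) ^ 2 ≤ (∫⁻ a, f a ∂μ) * ∫⁻ a, f a * g a ^ 2 ∂μ := by
  have hcs := ENNReal.lintegral_mul_le_Lp_mul_Lq (μ.withDensity f) Real.HolderConjugate.two_two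
    (aemeasurable_const (b := (1 : ℝ≥0∞))) hg.aemeasurable
  have hpow := ENNReal.rpow_le_rpow hcs (zero_le_two (α := ℝ))
  rw [ENNReal.mul_rpow_of_nonneg _ _ zero_le_two, ← ENNReal.rpow_mul, ← ENNReal.rpow_mul] at hpow
  simpa [lintegral_withDensity_eq_lintegral_mul _ hf, hg, hg.pow_const] using hpow

section Resolvent

variable {d : ℕ} {h c : ℝ} {F : Ed d → ℂ}

/-- The resolvent `(c - ihA)⁻¹ F = ∫₀^∞ e^{-cs} e^{ishA} F ds` of the generator of dilations. -/
def dilResolvent (d : ℕ) (h c : ℝ) (F : Ed d → ℂ) : Ed d → ℂ := fun x =>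
  ∫ s in Set.Ioi (0 : ℝ), (Real.exp (-(c * s)) : ℂ) * dil d (s * h) F x

lemma measurable_exp_mul_dil (h c : ℝ) (hF : Measurable F) :
    Measurable fun z : ℝ × Ed d => (Real.exp (-(c * z.1)) : ℂ) * dil d (z.1 * h) F z.2 :=
  Measurable.mul (by fun_prop) (measurable_dil_uncurry h hF)

lemma measurable_dilResolvent (h c : ℝ) (hF : Measurable F) :
    Measurable (dilResolvent d h c F) :=
  ((measurable_exp_mul_dil h c hF).comp measurable_swap).stronglyMeasurable.integral_prod_right'
    (ν := volume.restrict (Set.Ioi 0)) |>.measurable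

lemma integrableOn_exp_neg_mul {κ : ℝ} (hκ : 0 < κ) :
    IntegrableOn (fun s : ℝ => Real.exp (-(κ * s))) (Set.Ioi 0) := by
  simpa [neg_mul] using integrableOn_exp_mul_Ioi (a := -κ) (neg_neg_of_pos hκ) 0

lemma integrable_exp_mul_dil (hh : 0 ≤ h) (hc : 0 < c) (hFm : Measurable F) (hF : Integrable F) :
    Integrable (fun z : ℝ × Ed d => (Real.exp (-(c * z.1)) : ℂ) * dil d (z.1 * h) F z.2)
      ((volume.restrict (Set.Ioi 0)).prod volume) := by
  refine (integrable_prod_iff (measurable_exp_mul_dil h c hFm).aestronglyMeasurable).2 ⟨?_, ?_⟩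
  · refine ae_of_all _ fun s => ?_
    have hdil : Integrable (dil d (s * h) F) := memLp_one_iff_integrable.1
      (memLp_dil ENNReal.one_ne_top _ hFm (memLp_one_iff_integrable.2 hF))
    exact hdil.const_mul (Real.exp (-(c * s)) : ℂ)
  · have hnorm : ∀ s : ℝ, ∫ x, ‖(Real.exp (-(c * s)) : ℂ) * dil d (s * h) F x‖
        = Real.exp (-((c + h * d / 2) * s)) * ∫ x, ‖F x‖ := by
      intro s
      simp only [norm_mul, Complex.norm_real, Real.norm_of_nonneg (Real.exp_pos _).le,
        integral_const_mul, integral_norm_dil _ hFm, ← mul_assoc, ← Real.exp_add]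
      congr 2; ring
    simp only [hnorm]
    exact (integrableOn_exp_neg_mul (by positivity)).mul_const _

lemma integrable_dilResolvent (hh : 0 ≤ h) (hc : 0 < c) (hFm : Measurable F)
    (hF : Integrable F) : Integrable (dilResolvent d h c F) :=
  (integrable_exp_mul_dil hh hc hFm hF).integral_prod_right

lemma ae_integrableOn_exp_mul_dil (hh : 0 ≤ h) (hc : 0 < c) (hFm : Measurable F)
    (hF : Integrable F) : ∀ᵐ x : Ed d,
      IntegrableOn (fun s : ℝ => (Real.exp (-(c * s)) : ℂ) * dil d (s * h) F x) (Set.Ioi 0) :=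
  (integrable_exp_mul_dil hh hc hFm hF).prod_left_ae

lemma enorm_dilResolvent_sq_le (hF : Measurable F) (x : Ed d) :
    ‖dilResolvent d h c F x‖ₑ ^ 2
      ≤ (∫⁻ s in Set.Ioi (0 : ℝ), ENNReal.ofReal (Real.exp (-(c * s)))) *
        ∫⁻ s in Set.Ioi (0 : ℝ), ENNReal.ofReal (Real.exp (-(c * s))) *
          ‖dil d (s * h) F x‖ₑ ^ 2 := by
  refine le_trans (pow_le_pow_left' ((enorm_integral_le_lintegral_enorm _).trans_eq ?_) 2)
    (lintegral_mul_sq_le (by fun_prop)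
      ((measurable_dil_uncurry h hF).comp measurable_prodMk_right).enorm)
  simp only [enorm_mul, ← ofReal_norm (Real.exp _ : ℂ), Complex.norm_real,
    Real.norm_of_nonneg (Real.exp_pos _).le]

lemma eLpNorm_two_sq (f : Ed d → ℂ) : eLpNorm f 2 volume ^ 2 = ∫⁻ x, ‖f x‖ₑ ^ 2 := by
  simpa using eLpNorm_nnreal_pow_eq_lintegral (f := f) (μ := volume) two_ne_zero

lemma memLp_two_iff_lintegral_sq_ne_top {f : Ed d → ℂ} (hf : Measurable f) :
    MemLp f 2 ↔ ∫⁻ x, ‖f x‖ₑ ^ 2 ≠ ∞ := by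
  rw [MemLp, and_iff_right hf.aestronglyMeasurable, ← eLpNorm_two_sq, lt_top_iff_ne_top,
    ne_eq, ne_eq, ENNReal.pow_eq_top_iff, and_iff_left two_ne_zero]

lemma memLp_dilResolvent (hc : 0 < c) (hFm : Measurable F) (hF : MemLp F 2) :
    MemLp (dilResolvent d h c F) 2 := by
  rw [memLp_two_iff_lintegral_sq_ne_top (measurable_dilResolvent h c hFm)]
  set I : ℝ≥0∞ := ∫⁻ s in Set.Ioi (0 : ℝ), ENNReal.ofReal (Real.exp (-(c * s)))
  have hI : I ≠ ∞ := (integrableOn_exp_neg_mul hc).lintegral_lt_top.ne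
  have hF2 : ∫⁻ x, ‖F x‖ₑ ^ 2 ≠ ∞ := (memLp_two_iff_lintegral_sq_ne_top hFm).1 hF
  have hdil : ∀ s : ℝ, ∫⁻ x, ‖dil d (s * h) F x‖ₑ ^ 2 = ∫⁻ x, ‖F x‖ₑ ^ 2 := fun s => by
    rw [← eLpNorm_two_sq, eLpNorm_two_dil (s * h) hFm, eLpNorm_two_sq]
  refine ne_top_of_le_ne_top (ENNReal.mul_ne_top hI (ENNReal.mul_ne_top hI hF2)) ?_
  calc ∫⁻ x, ‖dilResolvent d h c F x‖ₑ ^ 2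
      ≤ ∫⁻ x, I * ∫⁻ s in Set.Ioi (0 : ℝ), ENNReal.ofReal (Real.exp (-(c * s))) *
          ‖dil d (s * h) F x‖ₑ ^ 2 := lintegral_mono (enorm_dilResolvent_sq_le hFm)
    _ = I * ∫⁻ s in Set.Ioi (0 : ℝ), ∫⁻ x, ENNReal.ofReal (Real.exp (-(c * s))) *
          ‖dil d (s * h) F x‖ₑ ^ 2 := by
        rw [lintegral_const_mul' _ _ hI, lintegral_lintegral_swap]
        exact (Measurable.mul (by fun_prop) (((measurable_dil_uncurry h hFm).comp
          measurable_swap).enorm.pow_const _)).aemeasurable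
    _ = I * (I * ∫⁻ x, ‖F x‖ₑ ^ 2) := by
        simp_rw [lintegral_const_mul' _ _ ENNReal.ofReal_ne_top, hdil]
        rw [lintegral_mul_const' _ _ hF2]

lemma dil_dilResolvent (h c t : ℝ) (F : Ed d → ℂ) (x : Ed d) :
    dil d (t * h) (dilResolvent d h c F) x = (Real.exp (c * t) : ℂ) *
      ∫ s in Set.Ioi t, (Real.exp (-(c * s)) : ℂ) * dil d (s * h) F x := by
  have hshift : ∫ s in Set.Ioi t, (Real.exp (-(c * s)) : ℂ) * dil d (s * h) F x
      = ∫ s in Set.Ioi (0 : ℝ), (Real.exp (-(c * (s + t))) : ℂ) * dil d ((s + t) * h) F x := by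
    rw [← MeasurePreserving.setIntegral_preimage_emb (measurePreserving_add_right volume t)
      (measurableEmbedding_addRight t)]
    simp
  rw [hshift, dil, dilResolvent, ← integral_const_mul, ← integral_const_mul]
  refine integral_congr_ae (ae_of_all _ fun s => ?_)
  have hexp : Real.exp (-(c * s)) = Real.exp (c * t) * Real.exp (-(c * (s + t))) := by
    rw [← Real.exp_add]; congr 1; ring
  have hdil : dil d ((s + t) * h) F x
      = (Real.exp (t * h * d / 2) : ℂ) * dil d (s * h) F (Real.exp (t * h) • x) := by
    rw [add_comm, add_mul, ← dil_dil]; rfl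
  simp only [hdil, hexp]
  push_cast; ring

lemma hasDerivAt_dil_dilResolvent (hF : Continuous F) {x : Ed d}
    (hx : IntegrableOn (fun s : ℝ => (Real.exp (-(c * s)) : ℂ) * dil d (s * h) F x) (Set.Ioi 0))
    (t : ℝ) :
    HasDerivAt (fun t => dil d (t * h) (dilResolvent d h c F) x)
      (c * dil d (t * h) (dilResolvent d h c F) x - dil d (t * h) F x) t := by
  have hcont : Continuous fun s : ℝ => (Real.exp (-(c * s)) : ℂ) * dil d (s * h) F x :=
    Continuous.mul (by fun_prop) (continuous_dil_apply h hF x)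
  have hexp : HasDerivAt (fun t : ℝ => (Real.exp (c * t) : ℂ)) (Real.exp (c * t) * c : ℝ) t :=
    (hasDerivAt_const_mul c).exp.ofReal_comp
  have hcancel : (Real.exp (c * t) : ℂ) * (Real.exp (-(c * t)) : ℂ) = 1 := by
    rw [← Complex.ofReal_mul, ← Real.exp_add]; simp
  simp only [dil_dilResolvent]
  refine (hexp.mul (hasDerivAt_integral_Ioi hcont hx t)).congr_deriv ?_
  push_cast at hcancel ⊢
  linear_combination (-dil d (t * h) F x) * hcancel

end Resolvent

lemma integral_Ioi_eq_zero_of_hasDerivAt {f f' : ℝ → ℂ} {a : ℝ} (ha : f a = 0)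
    (hd : ∀ t, HasDerivAt f (f' t) t) (hf : IntegrableOn f (Set.Ioi a))
    (hf' : IntegrableOn f' (Set.Ioi a)) : ∫ t in Set.Ioi a, f' t = 0 := by
  have hlim := tendsto_zero_of_hasDerivAt_of_integrableOn_Ioi (fun t _ => hd t) hf' hf
  rw [integral_Ioi_of_hasDerivAt_of_tendsto' (fun t _ => hd t) hf' hlim, ha, sub_zero]

/-- Integrating by parts in `t` trades `q` for its resolvent, at the price of differentiating the
weight: along the orbits `(∂_t - σc) e^{itσhA} (c - ihA)⁻¹ q = -σ e^{itσhA} q`. -/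
lemma dilForm_eq_dilForm_dilResolvent {d : ℕ} {σ h c : ℝ} (hσ : σ * σ = 1) (hh : 0 ≤ h)
    (hc : 0 < c) {w w₁ : ℝ → Ed d → ℝ} {μ μ₁ : ℝ → ℝ} (hw : IsDominatedWeight w μ)
    (hw₁ : IsDominatedWeight w₁ μ₁)
    (hderiv : ∀ t x, HasDerivAt (fun t => w t x) (σ * (w₁ t x - c * w t x)) t)
    (hzero : ∀ x, w 0 x = 0) {p q : Ed d → ℂ} (hpm : Measurable p) (hp : MemLp p 2)
    (hqc : Continuous q) (hq₁ : Integrable q) (hq : MemLp q 2) :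
    dilForm d (σ * h) w p q = dilForm d (σ * h) w₁ p (dilResolvent d h c q) := by
  have hqm := hqc.measurable
  have hVm := measurable_dilResolvent h c hqm
  have hV : MemLp (dilResolvent d h c q) 2 := memLp_dilResolvent hc hqm hq
  rw [hw.dilForm_eq_integral_integral hpm hp hqm hq,
    hw₁.dilForm_eq_integral_integral hpm hp hVm hV]
  refine integral_congr_ae ?_
  filter_upwards [(hw.integrable_prod hpm hp hqm hq (σ * h)).prod_left_ae,
    (hw.integrable_prod hpm hp hVm hV (σ * h)).prod_left_ae,
    (hw₁.integrable_prod hpm hp hVm hV (σ * h)).prod_left_ae,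
    ae_integrableOn_exp_mul_dil hh hc hqm hq₁] with x hwq hwV hw₁V hVx
  have hV' : ∀ t, HasDerivAt (fun t => dil d (t * (σ * h)) (dilResolvent d h c q) x)
      (σ * (c * dil d (t * (σ * h)) (dilResolvent d h c q) x - dil d (t * (σ * h)) q x)) t := by
    intro t
    simpa [Function.comp_def, mul_assoc] using!
      (hasDerivAt_dil_dilResolvent hqc hVx (t * σ)).scomp t (hasDerivAt_mul_const σ)
  have hprod : ∀ t, HasDerivAt
      (fun t => (w t x : ℂ) * (p x * dil d (t * (σ * h)) (dilResolvent d h c q) x))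
      (σ * ((w₁ t x : ℂ) * (p x * dil d (t * (σ * h)) (dilResolvent d h c q) x)
        - (w t x : ℂ) * (p x * dil d (t * (σ * h)) q x))) t := by
    intro t
    refine ((hderiv t x).ofReal_comp.mul ((hV' t).const_mul (p x))).congr_deriv ?_
    push_cast; ring
  have hint := integral_Ioi_eq_zero_of_hasDerivAt (by simp [hzero]) hprod hwV
    ((hw₁V.sub hwq).const_mul (σ : ℂ))
  have hσ0 : (σ : ℂ) ≠ 0 := by
    rintro h0; simp_all
  rw [integral_const_mul, integral_sub hw₁V hwq] at hint
  exact (sub_eq_zero.1 ((mul_eq_zero.1 hint).resolve_left hσ0)).symm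

section Conjugation

variable {d : ℕ} {a : Ed d → ℝ}

/-- The coefficient of `e^{-iτA} D_j a D_k e^{iτA}`, a differential operator of the same form. -/
def conjCoef (τ : ℝ) (a : Ed d → ℝ) : Ed d → ℝ := fun x =>
  Real.exp (2 * τ) * a (Real.exp (-τ) • x)

/-- The generator `a ↦ 2a - x·∇a` of the group `conjCoef`. -/
def conjGen (a : Ed d → ℝ) : Ed d → ℝ := fun x => 2 * a x - xdotOp d a x

/-- The remainder of the first order Taylor expansion of `τ ↦ conjCoef τ a` at `0`. -/
def taylorRem (τ : ℝ) (a : Ed d → ℝ) : Ed d → ℝ := fun x => conjCoef τ a x - a x - τ * conjGen a x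

lemma conjCoef_zero (a : Ed d → ℝ) : conjCoef 0 a = a := by
  funext x; simp [conjCoef]

lemma taylorRem_zero (a : Ed d → ℝ) : taylorRem 0 a = 0 := by
  funext x; simp [taylorRem, conjCoef_zero]

lemma conjCoef_exp_smul (τ : ℝ) (a : Ed d → ℝ) (x : Ed d) :
    conjCoef τ a (Real.exp τ • x) = Real.exp (2 * τ) * a x := by
  rw [conjCoef, smul_smul, ← Real.exp_add]; simp

lemma apply_exp_smul (τ : ℝ) (a : Ed d → ℝ) (x : Ed d) :
    a (Real.exp τ • x) = Real.exp (2 * τ) * conjCoef (-τ) a x := by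
  rw [conjCoef, ← mul_assoc, ← Real.exp_add]; simp

lemma measurable_conjCoef (ha : Measurable a) (η : ℝ) :
    Measurable fun z : ℝ × Ed d => conjCoef (z.1 * η) a z.2 := by
  unfold conjCoef; fun_prop

lemma abs_conjCoef_le {K : ℝ} (ha : ∀ x, |a x| ≤ K) (τ : ℝ) (x : Ed d) :
    |conjCoef τ a x| ≤ Real.exp (2 * τ) * K := by
  rw [conjCoef, abs_mul, Real.abs_exp]
  exact mul_le_mul_of_nonneg_left (ha _) (Real.exp_pos _).le

lemma hasDerivAt_comp_exp_neg_smul (ha : Differentiable ℝ a) (x : Ed d) (τ : ℝ) :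
    HasDerivAt (fun τ => a (Real.exp (-τ) • x)) (-xdotOp d a (Real.exp (-τ) • x)) τ := by
  have hexp : HasDerivAt (fun τ : ℝ => Real.exp (-τ) • x) (-(Real.exp (-τ) • x)) τ := by
    simpa using (hasDerivAt_neg τ).exp.smul_const x
  simpa [xdotOp, Function.comp_def] using! (ha _).hasFDerivAt.comp_hasDerivAt τ hexp

lemma hasDerivAt_conjCoef (ha : Differentiable ℝ a) (x : Ed d) (τ : ℝ) :
    HasDerivAt (fun τ => conjCoef τ a x) (conjCoef τ (conjGen a) x) τ := by
  refine ((hasDerivAt_const_mul 2).exp.mul (hasDerivAt_comp_exp_neg_smul ha x τ)).congr_deriv ?_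
  simp only [conjCoef, conjGen]
  ring

lemma hasDerivAt_conjCoef_mul (ha : Differentiable ℝ a) (x : Ed d) (η s : ℝ) :
    HasDerivAt (fun s => conjCoef (s * η) a x) (η * conjCoef (s * η) (conjGen a) x) s := by
  simpa [Function.comp_def] using!
    (hasDerivAt_conjCoef ha x (s * η)).scomp s (hasDerivAt_mul_const η)

end Conjugation

section Weights

variable {d : ℕ} {σ h : ℝ} {a : Ed d → ℝ}

/-- The weight of the form `∫ e^{-|t|} t (e^{ithA} B_{th} ·, ·) dt` on the half-line `t = σs`,
`s > 0`. -/
def weight₀ (σ h : ℝ) (a : Ed d → ℝ) (s : ℝ) (x : Ed d) : ℝ :=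
  Real.exp (-((1 + σ * h) * s)) * (taylorRem (s * (σ * h)) a x / h)

/-- The weight left by the first integration by parts. -/
def weight₁ (σ h : ℝ) (a : Ed d → ℝ) (s : ℝ) (x : Ed d) : ℝ :=
  Real.exp (-((1 + σ * h) * s)) * ((1 + σ) * (taylorRem (s * (σ * h)) a x / h)
    - (conjCoef (s * (σ * h)) (conjGen a) x - conjGen a x))

/-- The weight `weight₁` after the dilation is moved to the other argument. -/
def weight₂ (σ h : ℝ) (a : Ed d → ℝ) (s : ℝ) (y : Ed d) : ℝ :=
  weight₁ σ h a s (Real.exp (s * (σ * h)) • y)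

/-- The weight left by the second integration by parts; unlike `weight₀` it is bounded uniformly
as `h → 0`. -/
def weight₃ (σ h : ℝ) (a : Ed d → ℝ) (s : ℝ) (y : Ed d) : ℝ :=
  Real.exp (-((1 - σ * h) * s)) *
    (((1 + σ) * s - 1) * h * conjCoef (s * -(σ * h)) (conjGen (conjGen a)) y
      - (1 - σ) * (conjGen a y - conjCoef (s * -(σ * h)) (conjGen a) y))

lemma weight₀_zero (x : Ed d) : weight₀ σ h a 0 x = 0 := by
  simp [weight₀, taylorRem_zero]

lemma weight₂_zero (x : Ed d) : weight₂ σ h a 0 x = 0 := by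
  simp [weight₂, weight₁, taylorRem_zero, conjCoef_zero]

lemma weight₂_eq (s : ℝ) (y : Ed d) : weight₂ σ h a s y = Real.exp (-((1 - σ * h) * s)) *
    ((1 + σ) * ((a y - conjCoef (s * -(σ * h)) a y
        - s * (σ * h) * conjCoef (s * -(σ * h)) (conjGen a) y) / h)
      - (conjGen a y - conjCoef (s * -(σ * h)) (conjGen a) y)) := by
  have hexp : Real.exp (-((1 - σ * h) * s))
      = Real.exp (-((1 + σ * h) * s)) * Real.exp (2 * (s * (σ * h))) := by
    rw [← Real.exp_add]; ring_nf
  rw [weight₂, weight₁, taylorRem, conjCoef_exp_smul, conjCoef_exp_smul, apply_exp_smul _ a,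
    apply_exp_smul _ (conjGen a), hexp, mul_neg]
  ring

lemma hasDerivAt_weight₀ (hσ : σ * σ = 1) (hh : h ≠ 0) (ha : Differentiable ℝ a) (x : Ed d)
    (s : ℝ) : HasDerivAt (fun s => weight₀ σ h a s x)
      (-σ * (weight₁ σ h a s x - (1 - h) * weight₀ σ h a s x)) s := by
  have hrem : HasDerivAt (fun s => taylorRem (s * (σ * h)) a x)
      (σ * h * (conjCoef (s * (σ * h)) (conjGen a) x - conjGen a x)) s := by
    refine (((hasDerivAt_conjCoef_mul ha x (σ * h) s).sub_const (a x)).sub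
      ((hasDerivAt_mul_const (σ * h)).mul_const (conjGen a x))).congr_deriv ?_
    ring
  refine ((hasDerivAt_const_mul (1 + σ * h)).neg.exp.mul (hrem.div_const h)).congr_deriv ?_
  simp only [weight₀, weight₁, Pi.neg_apply]
  generalize Real.exp (-((1 + σ * h) * s)) = E
  generalize taylorRem (s * (σ * h)) a x = R
  field_simp
  linear_combination E * R * hσ

lemma hasDerivAt_weight₂ (hσ : σ * σ = 1) (hh : h ≠ 0) (ha : Differentiable ℝ a)
    (ha' : Differentiable ℝ (conjGen a)) (y : Ed d) (s : ℝ) :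
    HasDerivAt (fun s => weight₂ σ h a s y)
      (σ * (weight₃ σ h a s y - (1 - h) * weight₂ σ h a s y)) s := by
  simp only [weight₂_eq]
  have hE := hasDerivAt_conjCoef_mul ha y (-(σ * h)) s
  have hE' := hasDerivAt_conjCoef_mul ha' y (-(σ * h)) s
  refine ((hasDerivAt_const_mul (1 - σ * h)).neg.exp.mul
    (((((hE.const_sub (a y)).sub ((hasDerivAt_mul_const (σ * h)).mul hE')).div_const h).const_mul
      (1 + σ)).sub (hE'.const_sub (conjGen a y)))).congr_deriv ?_
  simp only [weight₃, Pi.neg_apply, Pi.sub_apply, Pi.mul_apply]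
  generalize conjCoef (s * -(σ * h)) (conjGen (conjGen a)) y = e₂
  generalize conjCoef (s * -(σ * h)) (conjGen a) y = e₁
  generalize conjCoef (s * -(σ * h)) a y = e₀
  generalize Real.exp (-((1 - σ * h) * s)) = E
  field_simp
  linear_combination E * (a y - e₀ - s * σ * h * e₁ - h * (conjGen a y - e₁)
    + s * h ^ 2 * σ * e₂) * hσ

lemma integrableOn_one_add_mul_exp_neg {κ : ℝ} (hκ : 0 < κ) :
    IntegrableOn (fun s : ℝ => (1 + s) * Real.exp (-(κ * s))) (Set.Ioi 0) := by
  have hmul : IntegrableOn (fun s : ℝ => s * Real.exp (-(κ * s))) (Set.Ioi 0) := by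
    simpa using integrableOn_rpow_mul_exp_neg_mul_rpow (s := 1) (by norm_num) one_pos hκ
  simpa only [add_mul, one_mul] using! (integrableOn_exp_neg_mul hκ).add hmul

lemma integral_one_add_mul_exp_neg_nonneg (κ : ℝ) :
    0 ≤ ∫ s in Set.Ioi (0 : ℝ), (1 + s) * Real.exp (-(κ * s)) :=
  setIntegral_nonneg measurableSet_Ioi fun _ hs =>
    mul_nonneg (add_nonneg zero_le_one (le_of_lt hs)) (Real.exp_pos _).le

lemma exp_mul_abs_le {η h₀ s A B X : ℝ} (hη : |η| ≤ h₀) (hs : 0 ≤ s) (hA : 0 ≤ A) (hB : 0 ≤ B)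
    (hX : |X| ≤ A + B * Real.exp (2 * (s * η))) :
    |Real.exp (-((1 + η) * s)) * X| ≤ (A + B) * Real.exp (-((1 - h₀) * s)) := by
  obtain ⟨hη₁, hη₂⟩ := abs_le.1 hη
  have hplus : Real.exp (-((1 + η) * s)) ≤ Real.exp (-((1 - h₀) * s)) :=
    Real.exp_le_exp.2 (by nlinarith)
  have hminus : Real.exp (-((1 + η) * s)) * Real.exp (2 * (s * η))
      ≤ Real.exp (-((1 - h₀) * s)) := by
    rw [← Real.exp_add]
    exact Real.exp_le_exp.2 (by nlinarith)
  rw [abs_mul, Real.abs_exp]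
  calc Real.exp (-((1 + η) * s)) * |X|
      ≤ Real.exp (-((1 + η) * s)) * (A + B * Real.exp (2 * (s * η))) := by gcongr
    _ = A * Real.exp (-((1 + η) * s))
        + B * (Real.exp (-((1 + η) * s)) * Real.exp (2 * (s * η))) := by ring
    _ ≤ A * Real.exp (-((1 - h₀) * s)) + B * Real.exp (-((1 - h₀) * s)) := by gcongr
    _ = _ := by ring

/-- `a` is twice differentiable under the group `conjCoef`, and `a`, `conjGen a` and
`conjGen (conjGen a)` are bounded by `K`. -/
structure IsConjBounded (a : Ed d → ℝ) (K : ℝ) : Prop where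
  differentiable : Differentiable ℝ a
  differentiable_gen : Differentiable ℝ (conjGen a)
  measurable_gen_gen : Measurable (conjGen (conjGen a))
  abs_le : ∀ x, |a x| ≤ K
  abs_gen_le : ∀ x, |conjGen a x| ≤ K
  abs_gen_gen_le : ∀ x, |conjGen (conjGen a) x| ≤ K

namespace IsConjBounded

variable {K h₀ : ℝ} (ha : IsConjBounded a K)

include ha

lemma nonneg : 0 ≤ K := (abs_nonneg _).trans (ha.abs_le 0)

lemma measurable : Measurable a := ha.differentiable.continuous.measurable

lemma measurable_gen : Measurable (conjGen a) := ha.differentiable_gen.continuous.measurable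

lemma abs_taylorRem_le {η s : ℝ} (hη : |η| ≤ 1) (hs : 0 ≤ s) (x : Ed d) :
    |taylorRem (s * η) a x| ≤ (1 + s) * K + K * Real.exp (2 * (s * η)) := by
  have hconj := abs_conjCoef_le ha.abs_le (s * η) x
  have hlin : |s * η * conjGen a x| ≤ s * K := by
    rw [abs_mul, abs_mul, abs_of_nonneg hs]
    have := ha.nonneg
    gcongr
    · exact mul_le_of_le_one_right hs hη
    · exact ha.abs_gen_le x
  have htri := (abs_sub (conjCoef (s * η) a x - a x) (s * η * conjGen a x)).trans
    (add_le_add_left (abs_sub _ _) _)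
  rw [taylorRem]
  linarith [ha.abs_le x]

lemma measurable_taylorRem (η : ℝ) :
    Measurable fun z : ℝ × Ed d => taylorRem (z.1 * η) a z.2 :=
  ((measurable_conjCoef ha.measurable η).sub (ha.measurable.comp measurable_snd)).sub
    (Measurable.mul (by fun_prop) (ha.measurable_gen.comp measurable_snd))

variable (hσ : |σ| = 1) (hh : 0 < h) (hhh₀ : h ≤ h₀) (hh₀ : h₀ < 1)

include hσ hh hhh₀ hh₀

lemma isDominatedWeight₀ : IsDominatedWeight (weight₀ σ h a)
    fun s => 2 / h * K * ((1 + s) * Real.exp (-((1 - h₀) * s))) where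
  measurable := Measurable.mul (by fun_prop) ((ha.measurable_taylorRem _).div_const h)
  integrableOn := (integrableOn_one_add_mul_exp_neg (sub_pos.2 hh₀)).const_mul _
  abs_le s hs x := by
    have hK := ha.nonneg
    have hη : |σ * h| ≤ h₀ := by rwa [abs_mul, hσ, one_mul, abs_of_pos hh]
    refine (exp_mul_abs_le (A := (1 + s) * K / h) (B := K / h) hη hs.le (by positivity)
      (by positivity) ?_).trans ?_
    · rw [abs_div, abs_of_pos hh, div_mul_eq_mul_div, ← add_div]
      gcongr
      exact ha.abs_taylorRem_le (hη.trans hh₀.le) hs.le x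
    · have : (1 + s) * K / h + K / h ≤ 2 / h * K * (1 + s) := by
        field_simp
        nlinarith [mul_nonneg hs.le hK]
      rw [← mul_assoc]
      gcongr

lemma isDominatedWeight₁ : IsDominatedWeight (weight₁ σ h a)
    fun s => (4 / h + 2) * K * ((1 + s) * Real.exp (-((1 - h₀) * s))) where
  measurable := Measurable.mul (by fun_prop)
    ((((ha.measurable_taylorRem _).div_const h).const_mul _).sub
      ((measurable_conjCoef ha.measurable_gen _).sub (ha.measurable_gen.comp measurable_snd)))
  integrableOn := (integrableOn_one_add_mul_exp_neg (sub_pos.2 hh₀)).const_mul _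
  abs_le s hs x := by
    have hK := ha.nonneg
    have hη : |σ * h| ≤ h₀ := by rwa [abs_mul, hσ, one_mul, abs_of_pos hh]
    refine (exp_mul_abs_le (A := 2 * ((1 + s) * K / h) + K) (B := 2 * (K / h) + K) hη hs.le
      (by positivity) (by positivity) ?_).trans ?_
    · have hrem : |(1 + σ) * (taylorRem (s * (σ * h)) a x / h)|
          ≤ 2 * (((1 + s) * K + K * Real.exp (2 * (s * (σ * h)))) / h) := by
        rw [abs_mul, abs_div, abs_of_pos hh]
        gcongr
        · linarith [abs_add_le 1 σ, abs_one (α := ℝ)]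
        · exact ha.abs_taylorRem_le (hη.trans hh₀.le) hs.le x
      have hdiff : |conjCoef (s * (σ * h)) (conjGen a) x - conjGen a x|
          ≤ Real.exp (2 * (s * (σ * h))) * K + K :=
        (abs_sub _ _).trans (add_le_add (abs_conjCoef_le ha.abs_gen_le _ x) (ha.abs_gen_le x))
      refine (abs_sub _ _).trans ((add_le_add hrem hdiff).trans_eq ?_)
      ring
    · have : 2 * ((1 + s) * K / h) + K + (2 * (K / h) + K) ≤ (4 / h + 2) * K * (1 + s) := by
        field_simp
        nlinarith [mul_nonneg hs.le hK, mul_nonneg (mul_nonneg hs.le hK) hh.le]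
      rw [← mul_assoc]
      gcongr

lemma isDominatedWeight₂ : IsDominatedWeight (weight₂ σ h a)
    fun s => (4 / h + 2) * K * ((1 + s) * Real.exp (-((1 - h₀) * s))) where
  measurable := (ha.isDominatedWeight₁ hσ hh hhh₀ hh₀).measurable.comp
    (g := Function.uncurry (weight₁ σ h a))
    (f := fun z : ℝ × Ed d => (z.1, Real.exp (z.1 * (σ * h)) • z.2)) (by fun_prop)
  integrableOn := (ha.isDominatedWeight₁ hσ hh hhh₀ hh₀).integrableOn
  abs_le s hs _ := (ha.isDominatedWeight₁ hσ hh hhh₀ hh₀).abs_le s hs _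

lemma isDominatedWeight₃ : IsDominatedWeight (weight₃ σ h a)
    fun s => 5 * K * ((1 + s) * Real.exp (-((1 - h₀) * s))) where
  measurable := Measurable.mul (by fun_prop)
    ((Measurable.mul (by fun_prop) (measurable_conjCoef ha.measurable_gen_gen _)).sub
      (((ha.measurable_gen.comp measurable_snd).sub
        (measurable_conjCoef ha.measurable_gen _)).const_mul _))
  integrableOn := (integrableOn_one_add_mul_exp_neg (sub_pos.2 hh₀)).const_mul _
  abs_le s hs x := by
    have hK := ha.nonneg
    have hη : |-(σ * h)| ≤ h₀ := by rwa [abs_neg, abs_mul, hσ, one_mul, abs_of_pos hh]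
    rw [weight₃, sub_eq_add_neg 1 (σ * h)]
    refine (exp_mul_abs_le (A := 2 * K) (B := (2 * s + 3) * K) hη hs.le (by positivity)
      (by positivity) ?_).trans ?_
    · have hfac : |((1 + σ) * s - 1) * h| ≤ 2 * s + 1 := by
        obtain ⟨hσ₁, hσ₂⟩ := _root_.abs_le.1 hσ.le
        rw [abs_mul, abs_of_pos hh]
        refine (mul_le_of_le_one_right (abs_nonneg _) (hhh₀.trans hh₀.le)).trans ?_
        exact _root_.abs_le.2 ⟨by nlinarith [hs], by nlinarith [hs]⟩
      have hgen : |((1 + σ) * s - 1) * h * conjCoef (s * -(σ * h)) (conjGen (conjGen a)) x|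
          ≤ (2 * s + 1) * (Real.exp (2 * (s * -(σ * h))) * K) := by
        rw [abs_mul]
        exact mul_le_mul hfac (abs_conjCoef_le ha.abs_gen_gen_le _ x) (abs_nonneg _)
          (by linarith [hs])
      have hdiff : |(1 - σ) * (conjGen a x - conjCoef (s * -(σ * h)) (conjGen a) x)|
          ≤ 2 * (K + Real.exp (2 * (s * -(σ * h))) * K) := by
        rw [abs_mul]
        refine mul_le_mul ?_ ((abs_sub _ _).trans (add_le_add (ha.abs_gen_le x)
          (abs_conjCoef_le ha.abs_gen_le _ x))) (abs_nonneg _) zero_le_two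
        linarith [abs_sub 1 σ, abs_one (α := ℝ)]
      refine (abs_sub _ _).trans ((add_le_add hgen hdiff).trans_eq ?_)
      ring
    · rw [← mul_assoc]
      gcongr
      nlinarith [mul_nonneg hs.le hK]

end IsConjBounded

end Weights

/-- Two integrations by parts, one for each argument, trade both `p` and `q` for their resolvents;
the boundary terms vanish since `weight₀` and `weight₂` do so at `s = 0`. -/
lemma IsConjBounded.norm_dilForm_weight₀_le {d : ℕ} {σ h h₀ K : ℝ} {a : Ed d → ℝ}
    (ha : IsConjBounded a K) (hσ : |σ| = 1) (hh : 0 < h) (hhh₀ : h ≤ h₀) (hh₀ : h₀ < 1)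
    {p q : Ed d → ℂ} (hpc : Continuous p) (hp₁ : Integrable p) (hp : MemLp p 2)
    (hqc : Continuous q) (hq₁ : Integrable q) (hq : MemLp q 2) :
    ‖dilForm d (-(σ * h)) (weight₀ σ h a) p q‖
      ≤ 5 * K * (∫ s in Set.Ioi 0, (1 + s) * Real.exp (-((1 - h₀) * s))) *
        (lpNorm (dilResolvent d h (1 - h) p) 2 volume *
          lpNorm (dilResolvent d h (1 - h) q) 2 volume) := by
  have hσσ : σ * σ = 1 := by rw [← abs_mul_abs_self, hσ, one_mul]
  have hc : 0 < 1 - h := by linarith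
  have hVqm := measurable_dilResolvent h (1 - h) hqc.measurable
  have hVq : MemLp (dilResolvent d h (1 - h) q) 2 := memLp_dilResolvent hc hqc.measurable hq
  have hVpm := measurable_dilResolvent h (1 - h) hpc.measurable
  have hVp : MemLp (dilResolvent d h (1 - h) p) 2 := memLp_dilResolvent hc hpc.measurable hp
  have hw₂ := ha.isDominatedWeight₂ hσ hh hhh₀ hh₀
  have hw₃ := ha.isDominatedWeight₃ hσ hh hhh₀ hh₀
  have hfirst : dilForm d (-(σ * h)) (weight₀ σ h a) p q
      = dilForm d (-(σ * h)) (weight₁ σ h a) p (dilResolvent d h (1 - h) q) := by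
    rw [← neg_mul]
    exact dilForm_eq_dilForm_dilResolvent (by rwa [neg_mul_neg]) hh.le hc
      (ha.isDominatedWeight₀ hσ hh hhh₀ hh₀) (ha.isDominatedWeight₁ hσ hh hhh₀ hh₀)
      (fun s x => by simpa using hasDerivAt_weight₀ hσσ hh.ne' ha.differentiable x s)
      weight₀_zero hpc.measurable hp hqc hq₁ hq
  have hsecond : dilForm d (σ * h) (weight₂ σ h a) (dilResolvent d h (1 - h) q) p
      = dilForm d (σ * h) (weight₃ σ h a) (dilResolvent d h (1 - h) q)
          (dilResolvent d h (1 - h) p) :=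
    dilForm_eq_dilForm_dilResolvent hσσ hh.le hc hw₂ hw₃
      (fun s y => by
        simpa using hasDerivAt_weight₂ hσσ hh.ne' ha.differentiable ha.differentiable_gen y s)
      weight₂_zero hVqm hVq hpc hp₁ hp
  rw [hfirst, dilForm_neg]
  change ‖dilForm d (σ * h) (weight₂ σ h a) (dilResolvent d h (1 - h) q) p‖ ≤ _
  rw [hsecond, mul_comm (lpNorm (dilResolvent d h (1 - h) p) 2 volume), ← integral_const_mul]
  exact hw₃.norm_dilForm_le hVq hVpm hVp _

section Coefficients

variable {d : ℕ} {a : Ed d → ℝ} {H : Ed d → Fin d → Fin d → ℝ} {j k : Fin d}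

lemma CbSmooth.hasTemperateGrowth (ha : CbSmooth d a) : a.HasTemperateGrowth := by
  refine ⟨ha.1, fun n => ?_⟩
  obtain ⟨C, hC⟩ := ha.2 n
  exact ⟨0, C, fun x => by simpa using hC x⟩

lemma hasTemperateGrowth_fderiv {E F : Type*} [NormedAddCommGroup E] [NormedSpace ℝ E]
    [NormedAddCommGroup F] [NormedSpace ℝ F] {f : E → F} (hf : f.HasTemperateGrowth) :
    (fderiv ℝ f).HasTemperateGrowth := by
  refine ⟨hf.1.fderiv_right (by simp), fun n => ?_⟩
  obtain ⟨k, C, hC⟩ := hf.2 (n + 1)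
  exact ⟨k, C, fun x => by simpa only [norm_iteratedFDeriv_fderiv] using hC x⟩

lemma hasTemperateGrowth_xdotOp (ha : a.HasTemperateGrowth) :
    (xdotOp d a).HasTemperateGrowth :=
  ContinuousLinearMap.bilinear_hasTemperateGrowth (𝕜 := ℝ)
    (ContinuousLinearMap.id ℝ (Ed d →L[ℝ] ℝ)) (hasTemperateGrowth_fderiv ha)
    Function.HasTemperateGrowth.id

lemma hasTemperateGrowth_conjGen (ha : a.HasTemperateGrowth) :
    (conjGen a).HasTemperateGrowth :=
  ((Function.HasTemperateGrowth.const 2).mul ha).sub (hasTemperateGrowth_xdotOp ha)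

lemma hasTemperateGrowth_conjCoef (ha : a.HasTemperateGrowth) (τ : ℝ) :
    (conjCoef τ a).HasTemperateGrowth :=
  (Function.HasTemperateGrowth.const (Real.exp (2 * τ))).mul
    (ha.comp (Real.exp (-τ) • ContinuousLinearMap.id ℝ (Ed d)).hasTemperateGrowth)

lemma hasTemperateGrowth_taylorRem (ha : a.HasTemperateGrowth) (τ : ℝ) :
    (taylorRem τ a).HasTemperateGrowth :=
  ((hasTemperateGrowth_conjCoef ha τ).sub ha).sub
    ((Function.HasTemperateGrowth.const τ).mul (hasTemperateGrowth_conjGen ha))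

lemma conjGen_conjGen (ha : a.HasTemperateGrowth) (x : Ed d) :
    conjGen (conjGen a) x = 4 * a x - 4 * xdotOp d a x + xdotOp d (xdotOp d a) x := by
  have hderiv : xdotOp d (conjGen a) x = 2 * xdotOp d a x - xdotOp d (xdotOp d a) x := by
    have hd : DifferentiableAt ℝ a x := ha.1.differentiable (by simp) x
    have hd' : DifferentiableAt ℝ (xdotOp d a) x :=
      (hasTemperateGrowth_xdotOp ha).1.differentiable (by simp) x
    unfold conjGen
    rw [xdotOp, fderiv_fun_sub (hd.const_mul 2) hd', fderiv_const_mul hd]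
    simp [xdotOp]
  rw [conjGen, hderiv, conjGen]
  ring

lemma xdotOp_Gmat (H : Ed d → Fin d → Fin d → ℝ) (j k : Fin d) :
    xdotOp d (fun x => Gmat d H x j k) = xdotOp d (fun x => H x j k) := by
  funext x
  simp only [xdotOp, Gmat, fderiv_const_add]

lemma hasTemperateGrowth_Gmat (hH : Function.HasTemperateGrowth fun x => H x j k) :
    Function.HasTemperateGrowth fun x => Gmat d H x j k :=
  (Function.HasTemperateGrowth.const (if j = k then 1 else 0)).add hH

lemma isConjBounded_Gmat {M : ℝ} (hH : Function.HasTemperateGrowth fun x => H x j k)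
    (hM : ∀ n ≤ 2, ∀ x, |(xdotOp d)^[n] (fun y => H y j k) x| ≤ M) :
    IsConjBounded (fun x => Gmat d H x j k) (9 * (1 + M)) := by
  have hG := hasTemperateGrowth_Gmat hH
  have hG' := hasTemperateGrowth_conjGen hG
  have h₀ : ∀ x, |Gmat d H x j k| ≤ 1 + M := fun x => (abs_add_le _ _).trans <| by
    have : |if j = k then (1 : ℝ) else 0| ≤ 1 := by split_ifs <;> simp
    exact add_le_add this (hM 0 (by norm_num) x)
  have h₁ : ∀ x, |xdotOp d (fun y => H y j k) x| ≤ M := hM 1 (by norm_num)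
  have h₂ : ∀ x, |xdotOp d (xdotOp d fun y => H y j k) x| ≤ M := hM 2 (by norm_num)
  have hM0 : 0 ≤ M := (abs_nonneg _).trans (h₁ 0)
  refine ⟨hG.1.differentiable (by simp), hG'.1.differentiable (by simp),
    (hasTemperateGrowth_conjGen hG').1.continuous.measurable, fun x => ?_, fun x => ?_, fun x => ?_⟩
  · linarith [h₀ x]
  · rw [conjGen, xdotOp_Gmat, abs_le]
    constructor <;> linarith [abs_le.1 (h₀ x), abs_le.1 (h₁ x)]
  · rw [conjGen_conjGen hG, xdotOp_Gmat, abs_le]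
    constructor <;> linarith [abs_le.1 (h₀ x), abs_le.1 (h₁ x), abs_le.1 (h₂ x)]

lemma mul_integral_integral_deriv_eq_taylor {φ φ' φ'' : ℝ → ℝ}
    (hφ : ∀ τ, HasDerivAt φ (φ' τ) τ) (hφ' : ∀ τ, HasDerivAt φ' (φ'' τ) τ)
    (hcont : Continuous φ'') (τ : ℝ) :
    τ * (τ * ∫ s in (0:ℝ)..1, s * ∫ r in (0:ℝ)..1, deriv φ' (r * (s * τ)))
      = φ τ - φ 0 - τ * φ' 0 := by
  have hφ'cont : Continuous φ' := continuous_iff_continuousAt.2 fun t => (hφ' t).continuousAt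
  have hinner : ∀ s : ℝ, τ * (s * ∫ r in (0:ℝ)..1, deriv φ' (r * (s * τ))) = φ' (s * τ) - φ' 0 := by
    intro s
    rw [funext fun t => (hφ' t).deriv, ← mul_assoc, mul_comm τ,
      intervalIntegral.mul_integral_comp_mul_right, zero_mul, one_mul]
    exact intervalIntegral.integral_eq_sub_of_hasDerivAt (fun t _ => hφ' t)
      (hcont.intervalIntegrable _ _)
  have hint : IntervalIntegrable (fun s => φ' (s * τ)) volume 0 1 :=
    (hφ'cont.comp (continuous_mul_const τ)).intervalIntegrable _ _
  rw [← intervalIntegral.integral_const_mul]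
  simp_rw [hinner]
  rw [intervalIntegral.integral_sub hint intervalIntegrable_const, mul_sub,
    intervalIntegral.mul_integral_comp_mul_right (f := φ'), zero_mul, one_mul,
    intervalIntegral.integral_eq_sub_of_hasDerivAt (fun t _ => hφ t)
      (hφ'cont.intervalIntegrable _ _)]
  simp

lemma mul_bCoef_eq_taylorRem (hH : Function.HasTemperateGrowth fun x => H x j k) (τ : ℝ)
    (x : Ed d) : τ * bCoef d H τ x j k = taylorRem τ (fun y => Gmat d H y j k) x := by
  have hG := hasTemperateGrowth_Gmat hH
  have hG' := hasTemperateGrowth_conjGen hG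
  have hG'' := (hasTemperateGrowth_conjGen hG').1.continuous
  have htaylor := mul_integral_integral_deriv_eq_taylor
    (hasDerivAt_conjCoef (hG.1.differentiable (by simp)) x)
    (hasDerivAt_conjCoef (hG'.1.differentiable (by simp)) x)
    (by unfold conjCoef; fun_prop) τ
  simpa only [conjCoef_zero] using! htaylor

lemma hasTemperateGrowth_bCoef (hH : Function.HasTemperateGrowth fun x => H x j k) {τ : ℝ}
    (hτ : τ ≠ 0) : Function.HasTemperateGrowth fun x => bCoef d H τ x j k := by
  have heq : (fun x => bCoef d H τ x j k)
      = fun x => τ⁻¹ * taylorRem τ (fun y => Gmat d H y j k) x := by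
    funext x
    rw [← mul_bCoef_eq_taylorRem hH, inv_mul_cancel_left₀ hτ]
  rw [heq]
  exact (Function.HasTemperateGrowth.const τ⁻¹).mul
    (hasTemperateGrowth_taylorRem (hasTemperateGrowth_Gmat hH) τ)

end Coefficients

section Pairing

open scoped LineDeriv SchwartzMap

variable {d : ℕ}

lemma pd_eq_lineDerivOp (j : Fin d) (u : 𝓢(Ed d, ℂ)) :
    pd d j u = ∂_{EuclideanSpace.single j (1 : ℝ)} u := by
  funext x
  rw [SchwartzMap.lineDerivOp_apply_eq_fderiv, pd]

lemma continuous_pd (j : Fin d) (u : 𝓢(Ed d, ℂ)) : Continuous (pd d j u) := by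
  rw [pd_eq_lineDerivOp]; exact SchwartzMap.continuous _

lemma integrable_pd (j : Fin d) (u : 𝓢(Ed d, ℂ)) : Integrable (pd d j u) := by
  rw [pd_eq_lineDerivOp]; exact SchwartzMap.integrable _

lemma memLp_two_pd (j : Fin d) (u : 𝓢(Ed d, ℂ)) : MemLp (pd d j u) 2 := by
  rw [pd_eq_lineDerivOp]; exact SchwartzMap.memLp _ 2 volume

lemma pd_dil {u : Ed d → ℂ} (hu : Differentiable ℝ u) (τ : ℝ) (j : Fin d) :
    pd d j (dil d τ u) = fun x => (Real.exp τ : ℂ) * dil d τ (pd d j u) x := by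
  funext x
  have hcomp : DifferentiableAt ℝ (fun x => u (Real.exp τ • x)) x :=
    DifferentiableAt.comp (f := fun x => Real.exp τ • x) x (hu _) (by fun_prop)
  have hchain : fderiv ℝ (fun x => u (Real.exp τ • x)) x
      = Real.exp τ • fderiv ℝ u (Real.exp τ • x) := fderiv_comp_smul _
  rw [pd]
  unfold dil
  rw [fderiv_const_mul hcomp, hchain]
  simp only [pd, smul_apply, smul_eq_mul, Complex.real_smul]
  ring

/-- The Schwartz function `b ∂_k u`, for a coefficient `b` of temperate growth. -/
def flux (b : Ed d → ℝ) (k : Fin d) (u : 𝓢(Ed d, ℂ)) : 𝓢(Ed d, ℂ) :=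
  SchwartzMap.smulLeftCLM ℂ (fun y => (b y : ℂ)) (∂_{EuclideanSpace.single k (1 : ℝ)} u)

lemma flux_apply {b : Ed d → ℝ} (hb : b.HasTemperateGrowth) (k : Fin d) (u : 𝓢(Ed d, ℂ))
    (x : Ed d) : flux b k u x = b x * pd d k u x := by
  have hbC : Function.HasTemperateGrowth fun y => (b y : ℂ) :=
    Function.Complex.hasTemperateGrowth_ofReal.comp hb
  rw [flux, SchwartzMap.smulLeftCLM_apply_apply hbC, pd_eq_lineDerivOp, smul_eq_mul]

lemma integrable_conj_pd_mul (j : Fin d) (w v : 𝓢(Ed d, ℂ)) :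
    Integrable fun x => conj (pd d j w x) * v x :=
  (memLp_two_pd j w).star.integrable_mul (v.memLp 2 volume)

lemma integral_conj_pd_mul (j : Fin d) (w v : 𝓢(Ed d, ℂ)) :
    ∫ x, conj (pd d j w x) * v x = -∫ x, conj (w x) * pd d j v x := by
  have hparts := SchwartzMap.integral_bilinear_lineDerivOp_right_eq_neg_left
    (μ := (volume : Measure (Ed d))) w v
    ((ContinuousLinearMap.mul ℝ ℂ).comp (Complex.conjCLE : ℂ →L[ℝ] ℂ)) (EuclideanSpace.single j 1)
  simp only [← pd_eq_lineDerivOp, ContinuousLinearMap.comp_apply, ContinuousLinearMap.mul_apply',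
    ContinuousLinearEquiv.coe_coe, Complex.conjCLE_apply] at hparts
  rw [hparts, neg_neg]

lemma conj_divGrad {b : Ed d → Fin d → Fin d → ℝ}
    (hb : ∀ j k, Function.HasTemperateGrowth fun x => b x j k) (u : 𝓢(Ed d, ℂ)) (x : Ed d) :
    conj (divGrad d b u x) = -∑ j, ∑ k, conj (pd d j (flux (fun y => b y j k) k u) x) := by
  have hflux : ∀ j k, (flux (fun y => b y j k) k u : Ed d → ℂ)
      = fun y => (b y j k : ℂ) * pd d k u y := fun j k => funext (flux_apply (hb j k) k u)
  simp only [divGrad, divGradC, map_neg, map_sum, hflux, pd]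

/-- The dilation of a Schwartz function, as a Schwartz function. -/
def dilSchwartz (τ : ℝ) (u : 𝓢(Ed d, ℂ)) : 𝓢(Ed d, ℂ) :=
  (Real.exp (τ * d / 2) : ℂ) • SchwartzMap.compCLMOfContinuousLinearEquiv ℂ
    (ContinuousLinearEquiv.smulLeft (R₁ := ℝ) (M₁ := Ed d)
      (Units.mk0 (Real.exp τ) (Real.exp_pos τ).ne')) u

lemma coe_dilSchwartz (τ : ℝ) (u : 𝓢(Ed d, ℂ)) : dilSchwartz τ u = dil d τ u := by
  funext x
  simp [dilSchwartz, dil, Units.smul_def]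

lemma pairL2_dil_left (τ : ℝ) (u v : Ed d → ℂ) :
    pairL2 d (dil d τ u) v = pairL2 d u (dil d (-τ) v) := by
  have hswap := integral_mul_dil_neg τ (fun _ => 1) (fun x => conj (u x)) v
  simp only [one_mul] at hswap
  rw [pairL2, pairL2, hswap]
  refine integral_congr_ae (ae_of_all _ fun x => ?_)
  simp only [dil, map_mul, Complex.conj_ofReal]
  ring

lemma pairL2_dil_divGrad (τ : ℝ) {b : Ed d → Fin d → Fin d → ℝ}
    (hb : ∀ j k, Function.HasTemperateGrowth fun x => b x j k) (u₁ u₂ : 𝓢(Ed d, ℂ)) :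
    pairL2 d (dil d τ (divGrad d b u₁)) u₂ = ∑ j, ∑ k, (Real.exp (-τ) : ℂ) *
      ∫ x, (b x j k : ℂ) * (conj (pd d k u₁ x) * dil d (-τ) (pd d j u₂) x) := by
  have hint : ∀ j k, Integrable fun x =>
      conj (pd d j (flux (fun y => b y j k) k u₁) x) * dilSchwartz (-τ) u₂ x :=
    fun j k => integrable_conj_pd_mul j _ _
  rw [pairL2_dil_left, ← coe_dilSchwartz, pairL2]
  simp only [conj_divGrad hb, neg_mul, Finset.sum_mul]
  rw [integral_neg, integral_finsetSum _ fun j _ => integrable_finsetSum _ fun k _ => hint j k,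
    ← Finset.sum_neg_distrib]
  refine Finset.sum_congr rfl fun j _ => ?_
  rw [integral_finsetSum _ fun k _ => hint j k, ← Finset.sum_neg_distrib]
  refine Finset.sum_congr rfl fun k _ => ?_
  rw [integral_conj_pd_mul, neg_neg, coe_dilSchwartz, pd_dil u₂.differentiable,
    ← integral_const_mul]
  refine integral_congr_ae (ae_of_all _ fun x => ?_)
  simp only [flux_apply (hb j k), map_mul, Complex.conj_ofReal]
  ring

end Pairing

section Plancherel

open scoped SchwartzMap

variable {E F : Type*} [NormedAddCommGroup E] [InnerProductSpace ℝ E] [FiniteDimensional ℝ E]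
  [MeasurableSpace E] [BorelSpace E] [NormedAddCommGroup F] [InnerProductSpace ℂ F]

lemma continuous_fourier_of_integrable {v : E → F} (hv : Integrable v) : Continuous (𝓕 v) :=
  VectorFourier.fourierIntegral_continuous (L := innerₗ E) Real.continuous_fourierChar
    continuous_inner hv

variable [CompleteSpace F]

lemma integral_fourier_smul_eq_flip {f : E → ℂ} {g : E → F} (hf : Integrable f)
    (hg : Integrable g) : ∫ ξ, 𝓕 f ξ • g ξ = ∫ x, f x • 𝓕 g x := by
  simpa using! VectorFourier.integral_fourierIntegral_smul_eq_flip (L := innerₗ E)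
    (μ := (volume : Measure E)) (ν := (volume : Measure E))
    Real.continuous_fourierChar continuous_inner hf hg

/-- Both sides define the same tempered distribution. -/
lemma fourier_toLp_ae_eq {v : E → F} (hv₁ : Integrable v) (hv : MemLp v 2) :
    (𝓕 (hv.toLp v) : Lp F 2 (volume : Measure E)) =ᵐ[volume] 𝓕 v := by
  refine ae_eq_of_integral_contDiff_smul_eq ((Lp.memLp _).locallyIntegrable (by norm_num))
    (continuous_fourier_of_integrable hv₁).locallyIntegrable fun g hg hgc => ?_
  have hgcC : HasCompactSupport fun x => (g x : ℂ) := hgc.comp_left Complex.ofReal_zero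
  let ψ : 𝓢(E, ℂ) := hgcC.toSchwartzMap (Complex.ofRealCLM.contDiff.comp hg)
  have hψ : ∀ f : E → F, ∫ x, g x • f x = ∫ x, ψ x • f x := fun f =>
    integral_congr_ae (ae_of_all _ fun x => (Complex.coe_smul (g x) (f x)).symm)
  have hdistr := DFunLike.congr_fun (Lp.fourier_toTemperedDistribution_eq (hv.toLp v)) ψ
  simp only [TemperedDistribution.fourier_apply, Lp.toTemperedDistribution_apply] at hdistr
  rw [hψ, hψ, ← hdistr, ← integral_fourier_smul_eq_flip ψ.integrable hv₁]
  refine integral_congr_ae ?_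
  filter_upwards [hv.coeFn_toLp] with x hx
  rw [hx, SchwartzMap.fourier_coe]

lemma eLpNorm_two_fourier {v : E → F} (hv₁ : Integrable v) (hv : MemLp v 2) :
    eLpNorm (𝓕 v) 2 volume = eLpNorm v 2 volume := by
  rw [← eLpNorm_congr_ae (fourier_toLp_ae_eq hv₁ hv), ← eLpNorm_congr_ae hv.coeFn_toLp,
    ← ENNReal.toReal_eq_toReal_iff' (Lp.eLpNorm_ne_top _) (Lp.eLpNorm_ne_top _),
    ← Lp.norm_def, ← Lp.norm_def, Lp.norm_fourier_eq]

end Plancherel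

section FourierDilation

open scoped LineDeriv SchwartzMap

variable {d : ℕ} {h c : ℝ}

lemma fourier_dil (τ : ℝ) (F : Ed d → ℂ) : 𝓕 (dil d τ F) = dil d (-τ) (𝓕 F) := by
  funext ξ
  have hscale := Measure.integral_comp_smul_of_nonneg (μ := (volume : Measure (Ed d)))
    (fun x => Real.fourierChar (-inner ℝ x (Real.exp (-τ) • ξ)) • F x) (Real.exp τ)
    (hR := (Real.exp_pos τ).le)
  have hchar : ∀ x : Ed d, Real.fourierChar (-inner ℝ x ξ) • dil d τ F x
      = (Real.exp (τ * d / 2) : ℂ) *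
        (Real.fourierChar (-inner ℝ (Real.exp τ • x) (Real.exp (-τ) • ξ)) •
          F (Real.exp τ • x)) := by
    intro x
    have hinner : inner ℝ (Real.exp τ • x) (Real.exp (-τ) • ξ) = inner ℝ x ξ := by
      rw [real_inner_smul_left, real_inner_smul_right, ← mul_assoc, ← Real.exp_add]; simp
    rw [hinner, dil]
    simp only [Circle.smul_def, smul_eq_mul]
    ring
  have hexp : Real.exp (τ * d / 2) * (Real.exp τ ^ d)⁻¹ = Real.exp (-τ * d / 2) := by
    rw [← Real.exp_nat_mul, ← Real.exp_neg, ← Real.exp_add]; ring_nf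
  rw [Real.fourier_eq, dil, Real.fourier_eq]
  simp_rw [hchar]
  rw [integral_const_mul, hscale, Complex.real_smul, ← mul_assoc, ← Complex.ofReal_mul,
    finrank_euclideanSpace_fin, hexp]

lemma fourier_dilResolvent (hh : 0 ≤ h) (hc : 0 < c) {F : Ed d → ℂ} (hFm : Measurable F)
    (hF : Integrable F) (ξ : Ed d) : 𝓕 (dilResolvent d h c F) ξ
      = ∫ s in Set.Ioi (0 : ℝ), (Real.exp (-(c * s)) : ℂ) * dil d (-(s * h)) (𝓕 F) ξ := by
  have hint := (integrable_exp_mul_dil hh hc hFm hF).swap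
  have hchar : Continuous fun z : Ed d × ℝ => (Real.fourierChar (-inner ℝ z.1 ξ) : ℂ) :=
    continuous_subtype_val.comp (Real.continuous_fourierChar.comp (by fun_prop))
  have hintChar := hint.bdd_mul (c := 1) hchar.aestronglyMeasurable
    (ae_of_all _ fun z => (Circle.norm_coe _).le)
  rw [Real.fourier_eq]
  simp only [dilResolvent, Circle.smul_def, smul_eq_mul, ← integral_const_mul]
  rw [integral_integral_swap hintChar]
  refine integral_congr_ae (ae_of_all _ fun s => ?_)
  simp only [← fourier_dil, Real.fourier_eq, ← integral_const_mul, Circle.smul_def, smul_eq_mul]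
  exact integral_congr_ae (ae_of_all _ fun x => by ring)

lemma fourier_pd (k : Fin d) (u : 𝓢(Ed d, ℂ)) (ξ : Ed d) :
    𝓕 (pd d k u) ξ = 2 * π * I * (ξ k : ℂ) * 𝓕 (u : Ed d → ℂ) ξ := by
  have hinner : Function.HasTemperateGrowth
      fun x : Ed d => inner ℝ x (EuclideanSpace.single k (1 : ℝ)) := by fun_prop
  rw [pd_eq_lineDerivOp, ← SchwartzMap.fourier_coe, SchwartzMap.fourier_lineDerivOp_eq,
    smul_apply, SchwartzMap.smulLeftCLM_apply_apply hinner, SchwartzMap.fourier_coe]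
  simp only [EuclideanSpace.inner_single_right, smul_eq_mul, Complex.real_smul, one_mul,
    conj_trivial]
  ring

/-- Since `∂_k e^{ishA} = e^{sh} e^{ishA} ∂_k`, a derivative shifts the spectral parameter. -/
lemma fourier_dilResolvent_pd (hh : 0 ≤ h) (hh₁ : h < 1) (k : Fin d) (u : 𝓢(Ed d, ℂ)) (ξ : Ed d) :
    𝓕 (dilResolvent d h (1 - h) (pd d k u)) ξ
      = 2 * π * I * ((ξ k : ℂ) * 𝓕 (dilResolvent d h 1 u) ξ) := by
  rw [fourier_dilResolvent hh (sub_pos.2 hh₁) (continuous_pd k u).measurable (integrable_pd k u),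
    fourier_dilResolvent hh one_pos u.continuous.measurable u.integrable, ← mul_assoc,
    ← integral_const_mul]
  refine integral_congr_ae (ae_of_all _ fun s => ?_)
  have hexp : Real.exp (-(1 * s)) = Real.exp (-((1 - h) * s)) * Real.exp (-(s * h)) := by
    rw [← Real.exp_add]; ring_nf
  simp only [dil, fourier_pd, hexp, PiLp.smul_apply, smul_eq_mul, Complex.ofReal_mul]
  ring

lemma memLp_norm_mul_of_memLp_coord_mul {r : ℝ≥0∞} {W : Ed d → ℂ}
    (hW : AEStronglyMeasurable W volume) (hcoord : ∀ k, MemLp (fun ξ => (ξ k : ℂ) * W ξ) r) :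
    MemLp (fun ξ => (‖ξ‖ : ℂ) * W ξ) r := by
  have hsum : MemLp (fun ξ : Ed d => ∑ k, ‖(ξ k : ℂ) * W ξ‖) r :=
    memLp_finsetSum _ fun k _ => (hcoord k).norm
  refine hsum.mono' (AEStronglyMeasurable.mul (by fun_prop) hW) (ae_of_all _ fun ξ => ?_)
  have hnorm : ‖ξ‖ ≤ ∑ k, |ξ k| := by
    rw [EuclideanSpace.norm_eq]
    refine Real.sqrt_le_iff.2 ⟨Finset.sum_nonneg fun _ _ => abs_nonneg _, ?_⟩
    simpa using Finset.sum_sq_le_sq_sum_of_nonneg (s := Finset.univ) (f := fun k => |ξ k|)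
      fun _ _ => abs_nonneg _
  simp only [norm_mul, Complex.norm_real, Real.norm_eq_abs, ← Finset.sum_mul, abs_norm]
  exact mul_le_mul_of_nonneg_right hnorm (norm_nonneg _)

lemma resDil_neg_I (h : ℝ) (u : Ed d → ℂ) : resDil d h (-I) u = I⁻¹ • dilResolvent d h 1 u := by
  funext x
  simp only [resDil, dilResolvent, Pi.smul_apply, smul_eq_mul]
  rw [if_pos (by simp), integral_Ici_eq_integral_Ioi]
  congr 1
  refine integral_congr_ae (ae_of_all _ fun s => ?_)
  have hexp : -(I * s * -I) = ((-(1 * s) : ℝ) : ℂ) := by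
    push_cast
    linear_combination (s : ℂ) * Complex.I_mul_I
  simp only [hexp, Complex.ofReal_exp]

lemma Dnorm_resDil_neg_I (hh : 0 ≤ h) (u : 𝓢(Ed d, ℂ)) : Dnorm d (resDil d h (-I) u)
    = lpNorm (fun ξ : Ed d => (‖ξ‖ : ℂ) * 𝓕 (dilResolvent d h 1 u) ξ) 2 volume := by
  have hcont : Continuous (𝓕 (dilResolvent d h 1 u)) :=
    continuous_fourier_of_integrable
      (integrable_dilResolvent hh one_pos u.continuous.measurable u.integrable)
  have hconst : 𝓕 (I⁻¹ • dilResolvent d h 1 u) = I⁻¹ • 𝓕 (dilResolvent d h 1 u) :=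
    VectorFourier.fourierIntegral_const_smul ..
  have hmul : Continuous fun ξ : Ed d => (‖ξ‖ : ℂ) * 𝓕 (dilResolvent d h 1 u) ξ := by fun_prop
  rw [Dnorm, resDil_neg_I, hconst, ← toReal_eLpNorm hmul.aestronglyMeasurable]
  exact congrArg ENNReal.toReal (eLpNorm_congr_norm_ae (ae_of_all _ fun ξ => by simp))

lemma memLp_dilResolvent_pd (hh₁ : h < 1) (k : Fin d) (u : 𝓢(Ed d, ℂ)) :
    MemLp (dilResolvent d h (1 - h) (pd d k u)) 2 :=
  memLp_dilResolvent (sub_pos.2 hh₁) (continuous_pd k u).measurable (memLp_two_pd k u)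

lemma eLpNorm_dilResolvent_pd (hh : 0 ≤ h) (hh₁ : h < 1) (k : Fin d) (u : 𝓢(Ed d, ℂ)) :
    eLpNorm (dilResolvent d h (1 - h) (pd d k u)) 2 volume
      = ENNReal.ofReal (2 * π) *
        eLpNorm (fun ξ : Ed d => (ξ k : ℂ) * 𝓕 (dilResolvent d h 1 u) ξ) 2 volume := by
  have hconst : ENNReal.ofReal (2 * π) = ‖(2 * π * I : ℂ)‖ₑ := by
    rw [← ofReal_norm]
    simp [abs_of_pos Real.pi_pos]
  rw [← eLpNorm_two_fourier (integrable_dilResolvent hh (sub_pos.2 hh₁)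
    (continuous_pd k u).measurable (integrable_pd k u)) (memLp_dilResolvent_pd hh₁ k u), hconst,
    ← eLpNorm_const_smul]
  exact congrArg (eLpNorm · 2 volume) (funext (fourier_dilResolvent_pd hh hh₁ k u))

lemma lpNorm_dilResolvent_pd_le (hh : 0 ≤ h) (hh₁ : h < 1) (k : Fin d) (u : 𝓢(Ed d, ℂ)) :
    lpNorm (dilResolvent d h (1 - h) (pd d k u)) 2 volume
      ≤ 2 * π * Dnorm d (resDil d h (-I) u) := by
  set W := 𝓕 (dilResolvent d h 1 u)
  have hW : Continuous W :=
    continuous_fourier_of_integrable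
      (integrable_dilResolvent hh one_pos u.continuous.measurable u.integrable)
  have hcoord : ∀ l, MemLp (fun ξ : Ed d => (ξ l : ℂ) * W ξ) 2 := by
    refine fun l => ⟨Continuous.aestronglyMeasurable (by fun_prop), ?_⟩
    have htop := (memLp_dilResolvent_pd hh₁ l u).2
    rw [eLpNorm_dilResolvent_pd hh hh₁] at htop
    exact ENNReal.lt_top_of_mul_ne_top_right htop.ne (by simp [Real.pi_pos])
  have hnorm := memLp_norm_mul_of_memLp_coord_mul hW.aestronglyMeasurable hcoord
  have hcoord_le : lpNorm (fun ξ : Ed d => (ξ k : ℂ) * W ξ) 2 volume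
      ≤ lpNorm (fun ξ : Ed d => (‖ξ‖ : ℂ) * W ξ) 2 volume := by
    rw [← lpNorm_norm hnorm.1]
    refine lpNorm_mono_real hnorm.norm fun ξ => ?_
    simp only [norm_mul, Complex.norm_real, norm_norm]
    exact mul_le_mul_of_nonneg_right (PiLp.norm_apply_le ξ k) (norm_nonneg _)
  rw [← toReal_eLpNorm (memLp_dilResolvent_pd hh₁ k u).1, eLpNorm_dilResolvent_pd hh hh₁,
    ENNReal.toReal_mul, ENNReal.toReal_ofReal Real.two_pi_pos.le, toReal_eLpNorm (hcoord k).1,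
    Dnorm_resDil_neg_I hh]
  exact mul_le_mul_of_nonneg_left hcoord_le Real.two_pi_pos.le

lemma dilResolvent_conj (h c : ℝ) (F : Ed d → ℂ) :
    dilResolvent d h c (conj F) = conj (dilResolvent d h c F) := by
  funext x
  simp only [dilResolvent, dil, Pi.conj_apply, ← integral_conj, map_mul, Complex.conj_ofReal]

end FourierDilation

section HalfLine

open scoped SchwartzMap

variable {d : ℕ} {H : Ed d → Fin d → Fin d → ℝ} {σ h : ℝ}

/-- The integrand `e^{-|t|} t (e^{ithA} B_{th} u₁, u₂)` of the form `𝒞_{h,H}`. -/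
def formIntegrand (H : Ed d → Fin d → Fin d → ℝ) (h : ℝ) (u₁ u₂ : Ed d → ℂ) (t : ℝ) : ℂ :=
  ((Real.exp (-|t|) * t : ℝ) : ℂ) * pairL2 d (dil d (t * h) (divGrad d (bCoef d H (t * h)) u₁)) u₂

lemma exp_mul_bCoef_eq_weight₀ {j k : Fin d} (hH : Function.HasTemperateGrowth fun x => H x j k)
    (hh : h ≠ 0) (s : ℝ) (x : Ed d) :
    Real.exp (-s) * (s * σ) * Real.exp (-(s * σ * h)) * bCoef d H (s * σ * h) x j k
      = weight₀ σ h (fun y => Gmat d H y j k) s x := by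
  have hexp : Real.exp (-((1 + σ * h) * s)) = Real.exp (-s) * Real.exp (-(s * σ * h)) := by
    rw [← Real.exp_add]; ring_nf
  rw [weight₀, ← mul_assoc s, ← mul_bCoef_eq_taylorRem hH, hexp]
  field_simp

lemma formIntegrand_eq_sum (hH : ∀ j k, Function.HasTemperateGrowth fun x => H x j k)
    (hσ : |σ| = 1) (hh : h ≠ 0) {s : ℝ} (hs : 0 < s) (u₁ u₂ : 𝓢(Ed d, ℂ)) :
    formIntegrand H h u₁ u₂ (s * σ) = ∑ j, ∑ k, ∫ x,
      (weight₀ σ h (fun y => Gmat d H y j k) s x : ℂ) *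
        (conj (pd d k u₁) x * dil d (s * -(σ * h)) (pd d j u₂) x) := by
  have hτ : s * σ * h ≠ 0 := mul_ne_zero (mul_ne_zero hs.ne' (by rintro rfl; simp at hσ)) hh
  have habs : |s * σ| = s := by rw [abs_mul, hσ, mul_one, abs_of_pos hs]
  have hneg : -(s * σ * h) = s * -(σ * h) := by ring
  rw [formIntegrand, habs, pairL2_dil_divGrad _ fun j k => hasTemperateGrowth_bCoef (hH j k) hτ]
  simp only [Finset.mul_sum, ← integral_const_mul]
  refine Finset.sum_congr rfl fun j _ => Finset.sum_congr rfl fun k _ =>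
    integral_congr_ae (ae_of_all _ fun x => ?_)
  simp only [← exp_mul_bCoef_eq_weight₀ (hH j k) hh, ← hneg, Pi.conj_apply]
  push_cast
  ring

lemma formIntegrand_comp_mul_ae_eq (hH : ∀ j k, Function.HasTemperateGrowth fun x => H x j k)
    (hσ : |σ| = 1) (hh : h ≠ 0) (u₁ u₂ : 𝓢(Ed d, ℂ)) :
    (fun s => formIntegrand H h u₁ u₂ (s * σ)) =ᵐ[volume.restrict (Set.Ioi 0)] fun s =>
      ∑ j, ∑ k, ∫ x, (weight₀ σ h (fun y => Gmat d H y j k) s x : ℂ) *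
        (conj (pd d k u₁) x * dil d (s * -(σ * h)) (pd d j u₂) x) := by
  filter_upwards [ae_restrict_mem measurableSet_Ioi] with s hs
  exact formIntegrand_eq_sum hH hσ hh hs u₁ u₂

variable {M h₀ : ℝ}

lemma integrableOn_integral_weight₀ {a : Ed d → ℝ} {K : ℝ} (ha : IsConjBounded a K)
    (hσ : |σ| = 1) (hh : 0 < h) (hh₁ : h < 1) (j k : Fin d) (u₁ u₂ : 𝓢(Ed d, ℂ)) :
    IntegrableOn (fun s => ∫ x, (weight₀ σ h a s x : ℂ) *
      (conj (pd d k u₁) x * dil d (s * -(σ * h)) (pd d j u₂) x)) (Set.Ioi 0) :=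
  (ha.isDominatedWeight₀ hσ hh le_rfl hh₁).integrableOn_integral
    (Complex.continuous_conj.comp (continuous_pd k u₁)).measurable (memLp_two_pd k u₁).star
    (continuous_pd j u₂).measurable (memLp_two_pd j u₂) _

lemma norm_dilForm_weight₀_pd_le {a : Ed d → ℝ} {K : ℝ} (ha : IsConjBounded a K) (hσ : |σ| = 1)
    (hh : 0 < h) (hhh₀ : h ≤ h₀) (hh₀ : h₀ < 1) (j k : Fin d) (u₁ u₂ : 𝓢(Ed d, ℂ)) :
    ‖dilForm d (-(σ * h)) (weight₀ σ h a) (conj (pd d k u₁)) (pd d j u₂)‖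
      ≤ 5 * K * (∫ s in Set.Ioi 0, (1 + s) * Real.exp (-((1 - h₀) * s))) *
        ((2 * π * Dnorm d (resDil d h (-I) u₁)) * (2 * π * Dnorm d (resDil d h (-I) u₂))) := by
  have hh₁ : h < 1 := hhh₀.trans_lt hh₀
  have hV₁ : lpNorm (dilResolvent d h (1 - h) (conj (pd d k u₁))) 2 volume
      ≤ 2 * π * Dnorm d (resDil d h (-I) u₁) := by
    rw [dilResolvent_conj, lpNorm_conj]
    exact lpNorm_dilResolvent_pd_le hh.le hh₁ k u₁
  refine (ha.norm_dilForm_weight₀_le hσ hh hhh₀ hh₀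
    (Complex.continuous_conj.comp (continuous_pd k u₁))
    (Complex.conjCLE.toContinuousLinearMap.integrable_comp (integrable_pd k u₁))
    (memLp_two_pd k u₁).star (continuous_pd j u₂) (integrable_pd j u₂) (memLp_two_pd j u₂)).trans ?_
  exact mul_le_mul_of_nonneg_left
    (mul_le_mul hV₁ (lpNorm_dilResolvent_pd_le hh.le hh₁ j u₂) lpNorm_nonneg
      (lpNorm_nonneg.trans hV₁))
    (mul_nonneg (mul_nonneg (by norm_num) ha.nonneg) (integral_one_add_mul_exp_neg_nonneg _))

section Summation

variable (hH : ∀ j k, Function.HasTemperateGrowth fun x => H x j k)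
  (hM : ∀ j k, ∀ n ≤ 2, ∀ x, |(xdotOp d)^[n] (fun y => H y j k) x| ≤ M)
  (hσ : |σ| = 1) (hh : 0 < h) (u₁ u₂ : 𝓢(Ed d, ℂ))

include hH hM hσ hh

lemma integrableOn_formIntegrand (hh₁ : h < 1) :
    IntegrableOn (fun s => formIntegrand H h u₁ u₂ (s * σ)) (Set.Ioi 0) := by
  rw [IntegrableOn, integrable_congr (formIntegrand_comp_mul_ae_eq hH hσ hh.ne' u₁ u₂)]
  exact integrable_finsetSum _ fun j _ => integrable_finsetSum _ fun k _ =>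
    integrableOn_integral_weight₀ (isConjBounded_Gmat (hH j k) (hM j k)) hσ hh hh₁ j k u₁ u₂

lemma integral_formIntegrand_eq_sum_dilForm (hh₁ : h < 1) :
    ∫ s in Set.Ioi (0 : ℝ), formIntegrand H h u₁ u₂ (s * σ) = ∑ j, ∑ k,
      dilForm d (-(σ * h)) (weight₀ σ h fun y => Gmat d H y j k)
        (conj (pd d k u₁)) (pd d j u₂) := by
  have hint := fun j k =>
    integrableOn_integral_weight₀ (isConjBounded_Gmat (hH j k) (hM j k)) hσ hh hh₁ j k u₁ u₂
  rw [integral_congr_ae (formIntegrand_comp_mul_ae_eq hH hσ hh.ne' u₁ u₂),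
    integral_finsetSum _ fun j _ => integrable_finsetSum _ fun k _ => hint j k]
  exact Finset.sum_congr rfl fun j _ => integral_finsetSum _ fun k _ => hint j k

lemma norm_integral_formIntegrand_half_le (hhh₀ : h ≤ h₀) (hh₀ : h₀ < 1) :
    ‖∫ s in Set.Ioi (0 : ℝ), formIntegrand H h u₁ u₂ (s * σ)‖
      ≤ 180 * π ^ 2 * d ^ 2 * (∫ s in Set.Ioi 0, (1 + s) * Real.exp (-((1 - h₀) * s))) *
        ((1 + M) * Dnorm d (resDil d h (-I) u₁) * Dnorm d (resDil d h (-I) u₂)) := by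
  rw [integral_formIntegrand_eq_sum_dilForm hH hM hσ hh u₁ u₂ (hhh₀.trans_lt hh₀)]
  refine (norm_sum_le_of_le _ fun j _ => norm_sum_le_of_le _ fun k _ =>
    norm_dilForm_weight₀_pd_le (isConjBounded_Gmat (hH j k) (hM j k)) hσ hh hhh₀ hh₀
      j k u₁ u₂).trans_eq ?_
  simp only [Finset.sum_const, Finset.card_univ, Fintype.card_fin, nsmul_eq_mul]
  ring

end Summation

lemma integral_eq_integral_Ioi_mul_one_add_mul_neg_one {f : ℝ → ℂ}
    (hpos : IntegrableOn (fun s => f (s * 1)) (Set.Ioi 0))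
    (hneg : IntegrableOn (fun s => f (s * -1)) (Set.Ioi 0)) :
    ∫ t, f t = (∫ s in Set.Ioi 0, f (s * 1)) + ∫ s in Set.Ioi 0, f (s * -1) := by
  simp only [mul_one, mul_neg] at hpos hneg ⊢
  have hIic : IntegrableOn f (Set.Iic 0) := by
    rw [integrableOn_Iic_iff_integrableOn_Iio]
    simpa using hneg.comp_neg
  rw [integral_comp_neg_Ioi, neg_zero, add_comm, intervalIntegral.integral_Iic_add_Ioi hIic hpos]

lemma one_add_mul_Dnorm_mul_Dnorm_nonneg
    (hM : ∀ (j k : Fin d) (x : Ed d), |H x j k| ≤ M) (w₁ w₂ : Ed d → ℂ) :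
    0 ≤ (1 + M) * Dnorm d w₁ * Dnorm d w₂ := by
  rcases Nat.eq_zero_or_pos d with rfl | hd
  · have hzero : Dnorm 0 w₁ = 0 := by simp [Dnorm, Subsingleton.elim _ (0 : Ed 0)]
    simp [hzero]
  · have hM0 : 0 ≤ M := (abs_nonneg _).trans (hM ⟨0, hd⟩ ⟨0, hd⟩ 0)
    exact mul_nonneg (mul_nonneg (by linarith) ENNReal.toReal_nonneg) ENNReal.toReal_nonneg

end HalfLine

theorem statement12_general (d : ℕ) (h₀ : ℝ) (hh₀ : h₀ < 1) :
    ∃ C : ℝ, 0 < C ∧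
      ∀ H : Ed d → Fin d → Fin d → ℝ,
        (∀ j k, Function.HasTemperateGrowth fun x => H x j k) →
        ∀ M : ℝ,
          (∀ (j k : Fin d) (n : ℕ), n ≤ 2 →
            ∀ x, |(xdotOp d)^[n] (fun y => H y j k) x| ≤ M) →
          ∀ h : ℝ, 0 < h → h ≤ h₀ →
            ∀ u₁ u₂ : SchwartzMap (Ed d) ℂ,
              ‖(1 / 2 : ℂ) * ∫ t : ℝ, ((Real.exp (-|t|) * t : ℝ) : ℂ) *
                  pairL2 d (dil d (t * h) (divGrad d (bCoef d H (t * h)) u₁)) u₂‖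
                ≤ C * (1 + M) * Dnorm d (resDil d h (-I) u₁) * Dnorm d (resDil d h (-I) u₂) := by
  have hJ := integral_one_add_mul_exp_neg_nonneg (1 - h₀)
  set J := ∫ s in Set.Ioi (0 : ℝ), (1 + s) * Real.exp (-((1 - h₀) * s))
  refine ⟨1 + 180 * π ^ 2 * d ^ 2 * J, by positivity, fun H hH M hM h hh hhh₀ u₁ u₂ => ?_⟩
  have hh₁ : h < 1 := hhh₀.trans_lt hh₀
  have hpos := norm_integral_formIntegrand_half_le (σ := 1) hH hM (by simp) hh u₁ u₂ hhh₀ hh₀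
  have hneg := norm_integral_formIntegrand_half_le (σ := -1) hH hM (by simp) hh u₁ u₂ hhh₀ hh₀
  have hnonneg := one_add_mul_Dnorm_mul_Dnorm_nonneg (fun j k => hM j k 0 (by norm_num))
    (resDil d h (-I) u₁) (resDil d h (-I) u₂)
  change ‖(1 / 2 : ℂ) * ∫ t, formIntegrand H h u₁ u₂ t‖ ≤ _
  rw [integral_eq_integral_Ioi_mul_one_add_mul_neg_one
    (integrableOn_formIntegrand hH hM (by simp) hh u₁ u₂ hh₁)
    (integrableOn_formIntegrand hH hM (by simp) hh u₁ u₂ hh₁), norm_mul,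
    show ‖(1 / 2 : ℂ)‖ = 1 / 2 by simp]
  linarith [norm_add_le (∫ s in Set.Ioi (0 : ℝ), formIntegrand H h u₁ u₂ (s * 1))
    (∫ s in Set.Ioi (0 : ℝ), formIntegrand H h u₁ u₂ (s * -1))]

/-- **Proposition (bound for `𝒞_{h,H}`).** For every `0 < h₀ < 1/4` there is `C > 0`
such that the bilinear form
`(𝒞_{h,H}u₁, u₂) = (1/2) ∫_ℝ e^{-|t|} t (e^{ithA} B_{th} u₁, u₂) dt`
(where `B_τ = τ ∫₀¹ s Q_{sτ} ds` and `Q_s = ∫₀¹ (dP_τ/dτ)|_{τ=σs} dσ`, so that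
`P_{sh} = P₀ + sh Q_{sh}`) satisfies
`|(𝒞_{h,H}u₁,u₂)| ≤ C (1+‖H‖_{4,dil}) ‖|D|(hA+i)⁻¹u₁‖_{L²} ‖|D|(hA+i)⁻¹u₂‖_{L²}`
for all Schwartz `u₁, u₂`, all `0 < h < h₀` and all `H` (`M` is any bound for
`‖H‖_{4,dil}`). -/
theorem statement12 (d : ℕ) (h₀ : ℝ) (hh₀ : 0 < h₀) (hh₀' : h₀ < 1 / 4) :
    ∃ C : ℝ, 0 < C ∧
      ∀ H : Ed d → Fin d → Fin d → ℝ,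
        (∀ j k, MemSdil d fun x => H x j k) →
        (∀ x j k, H x j k = H x k j) →
        UniformlyElliptic d (Gmat d H) →
        ∀ M : ℝ,
          (∀ (j k : Fin d) (n : ℕ), n ≤ 4 →
            ∀ x, |(xdotOp d)^[n] (fun y => H y j k) x| ≤ M) →
          ∀ h : ℝ, 0 < h → h < h₀ →
            ∀ u₁ u₂ : SchwartzMap (Ed d) ℂ,
              ‖(1 / 2 : ℂ) * ∫ t : ℝ, ((Real.exp (-|t|) * t : ℝ) : ℂ) *
                  pairL2 d (dil d (t * h) (divGrad d (bCoef d H (t * h)) ⇑u₁)) ⇑u₂‖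
                ≤ C * (1 + M) * Dnorm d (resDil d h (-Complex.I) ⇑u₁) *
                    Dnorm d (resDil d h (-Complex.I) ⇑u₂) := by
  obtain ⟨C, hC, hbound⟩ := statement12_general d h₀ (by linarith)
  exact ⟨C, hC, fun H hH _ _ M hM h hh hhh₀ => hbound H (fun j k => (hH j k).1.hasTemperateGrowth) M
    (fun j k n hn => hM j k n (hn.trans (by norm_num))) h hh hhh₀.le⟩

end
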